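/- Let n ≥ 3, let L be the permutation group induced by Sym(n) on ordered pairs of distinct elements of {1,…,n}, and let (Γ,G) be a locally L pair. Then for every edge {x,y} of Γ, the group G_{xy}^{[2]} = G_x^{[2]} ∩ G_y^{[2]} is trivial. -/

import Mathlib

open MulAction Pointwise

/-- The set of ordered pairs of distinct elements of `{1,…,n}`. -/
abbrev OPairs (n : ℕ) : Type := {p : Fin n × Fin n // p.1 ≠ p.2}

/-- `Sym(n)` acts on the ordered pairs of distinct elements. -/
instance opairsAction (n : ℕ) : MulAction (Equiv.Perm (Fin n)) (OPairs n) where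
  smul σ p := ⟨(σ p.1.1, σ p.1.2), fun h => p.2 (σ.injective h)⟩
  one_smul p := rfl
  mul_smul σ τ p := rfl

/-- Every element of `G` is an automorphism of `Γ`. -/
def PreservesAdj {V : Type*} (Γ : SimpleGraph V) (G : Subgroup (Equiv.Perm V)) : Prop :=
  ∀ g ∈ G, ∀ u v : V, Γ.Adj u v ↔ Γ.Adj (g u) (g v)

/-- The pointwise stabiliser in `G` of the ball of radius `i` around `x`. -/
def ballStab {V : Type*} (Γ : SimpleGraph V) (G : Subgroup (Equiv.Perm V)) (x : V) (i : ℕ) :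
    Subgroup G :=
  ⨅ (v : V) (_ : Γ.dist x v ≤ i), MulAction.stabilizer G v

/-- `(Γ, G)` is a locally `L` pair, for `L` the permutation group induced by `Sym(n)` on
ordered pairs of distinct elements of `{1,…,n}`. -/
def IsLocallyOPairs (n : ℕ) {V : Type*} (Γ : SimpleGraph V) (G : Subgroup (Equiv.Perm V)) :
    Prop :=
  PreservesAdj Γ G ∧ MulAction.IsPretransitive G V ∧
  ∀ x : V, ∃ (e : Γ.neighborSet x ≃ OPairs n)
      (φ : MulAction.stabilizer G x →* Equiv.Perm (Fin n)),
    Function.Surjective φ ∧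
    ∀ (g : MulAction.stabilizer G x) (v : Γ.neighborSet x),
      ((e.symm (φ g • e v) : Γ.neighborSet x) : V) = g • (v : V)

/-! A subgroup of `G_{xy}` that is normal in both `G_x` and `G_y` is trivial, since `Γ` is
connected and `G` is faithful. For `n = 3` a permutation fixing two points is trivial, so
`G_{xy} = G_x^{[1]} = G_y^{[1]}` is trivial.

Let `n ≥ 4` and suppose `G_{xy}^{[2]} ≠ 1`; it has a simple subnormal subgroup `M`.

If `M` is perfect, it commutes with its other conjugates that are subnormal in the same `G_v^{[1]}`
(Wielandt). Suppose `M` is subnormal in `G_v^{[1]}` but not in `G_w^{[1]}` for some `w ~ v`. Then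
for every `z ~ v` the normaliser of `M` contains a normal subgroup of `G_{vz}` that acts
nontrivially on the neighbours of `v`, and these subgroups together are transitive on the
neighbours of `v`; so `M` is subnormal in `G_u^{[1]}` for no `u ~ v`. As `M` is subnormal in both
`G_x^{[1]}` and `G_y^{[1]}`, it is thus subnormal in all the `G_v^{[1]}`, and fixes every vertex.

Otherwise `M` is a `p`-group, so `O_p(G_{xy}^{[2]}) ≠ 1`. Then `O_p(G_{xy})` acts nontrivially on
the neighbours of `x`, which forces `(n, p)` to be `(4, 2)`, `(5, 3)` or `(6, 2)`. Put
`Z_{xz} = Ω₁(Z(O_p(G_{xz})))` and let `V_x` be generated by the `Z_{xz}` with `z ~ x`. Let `b` be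
the least distance of vertices `u`, `v` such that `V_u` acts nontrivially on the neighbours of `v`.
Then `b ≥ 2`, and for critical `u` and `v` the indices of the centralisers in `V_u` and `V_v` force
`p = 2`. The commutators `R_x = [V_z, O_p(G_{zx})]` do not depend on `z ~ x`. For `b ≥ 3` the group
`R_y` is the same for all neighbours `y` of a critical vertex, hence trivial, although critical
modules do not commute. For `b = 2` a commutator of involutions can be written in two ways that
place it in `R_x ∩ R_y = 1` for an edge `{x, y}`, whereas the involutions do not commute. -/

section Conjugation

open Subgroup

variable {G : Type*} [Group G] {H K L M : Subgroup G} {g k : G}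

theorem mem_conj_smul : k ∈ MulAut.conj g • K ↔ g⁻¹ * k * g ∈ K := by
  rw [mem_pointwise_smul_iff_inv_smul_mem, ← map_inv, MulAut.smul_def, MulAut.conj_apply, inv_inv]

theorem conj_mem_conj_smul (hk : k ∈ K) : g * k * g⁻¹ ∈ MulAut.conj g • K := by
  rw [mem_conj_smul]
  simpa only [mul_assoc, inv_mul_cancel_left, inv_mul_cancel, mul_one] using hk

theorem conj_mul_smul (g h : G) (K : Subgroup G) :
    MulAut.conj (g * h) • K = MulAut.conj g • MulAut.conj h • K := by
  rw [map_mul, mul_smul]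

theorem conj_inv_smul_smul (g : G) (K : Subgroup G) :
    MulAut.conj g⁻¹ • MulAut.conj g • K = K := by
  rw [map_inv, inv_smul_smul]

theorem conj_smul_inv_smul (g : G) (K : Subgroup G) :
    MulAut.conj g • MulAut.conj g⁻¹ • K = K := by
  rw [map_inv, smul_inv_smul]

theorem conj_smul_mono (g : G) (h : H ≤ K) : MulAut.conj g • H ≤ MulAut.conj g • K :=
  pointwise_smul_le_pointwise_smul_iff.2 h

theorem conj_smul_commutator (g : G) (H K : Subgroup G) :
    MulAut.conj g • ⁅H, K⁆ = ⁅MulAut.conj g • H, MulAut.conj g • K⁆ :=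
  map_commutator ..

theorem conj_smul_iSup {ι : Sort*} (g : G) (K : ι → Subgroup G) :
    MulAut.conj g • ⨆ i, K i = ⨆ i, MulAut.conj g • K i :=
  map_iSup ..

theorem le_normalizer_iff_conj_smul_eq :
    H ≤ normalizer K ↔ ∀ h ∈ H, MulAut.conj h • K = K :=
  forall₂_congr fun _ _ => mem_normalizer_iff_map_conj_eq

theorem conj_smul_eq_of_le_normalizer (h : H ≤ normalizer K) (hg : g ∈ H) :
    MulAut.conj g • K = K :=
  le_normalizer_iff_conj_smul_eq.1 h g hg

theorem conj_mem_of_le_normalizer (h : H ≤ normalizer K) (hg : g ∈ H) (hk : k ∈ K) :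
    g * k * g⁻¹ ∈ K :=
  le_normalizer_iff.1 h g hg k hk

theorem conj_smul_le_normalizer (h : H ≤ normalizer K) (g : G) :
    MulAut.conj g • H ≤ normalizer (MulAut.conj g • K : Subgroup G) :=
  (conj_smul_mono g h).trans (le_normalizer_map _)

theorem conj_smul_le_centralizer (h : H ≤ centralizer K) (g : G) :
    MulAut.conj g • H ≤ centralizer (MulAut.conj g • K : Subgroup G) := by
  rw [← commutator_eq_bot_iff_le_centralizer] at h ⊢
  rw [← conj_smul_commutator, h, smul_bot]

theorem le_normalizer_inf (hK : H ≤ normalizer K) (hL : H ≤ normalizer L) :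
    H ≤ normalizer (K ⊓ L : Subgroup G) :=
  (le_inf hK hL).trans inf_normalizer_le_normalizer_inf

theorem le_normalizer_sup (hK : H ≤ normalizer K) (hL : H ≤ normalizer L) :
    H ≤ normalizer (K ⊔ L : Subgroup G) :=
  (le_inf hK hL).trans (normalizer_inf_normalizer_le_normalizer_sup K L)

theorem le_normalizer_commutator (hK : H ≤ normalizer K) (hL : H ≤ normalizer L) :
    H ≤ normalizer (⁅K, L⁆ : Subgroup G) := by
  rw [le_normalizer_iff_conj_smul_eq] at *
  intro h hh
  rw [conj_smul_commutator, hK h hh, hL h hh]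

theorem le_normalizer_of_le_centralizer (h : H ≤ centralizer K) : H ≤ normalizer K :=
  h.trans (centralizer_le_normalizer _)

theorem le_normalizer_centralizer (h : H ≤ normalizer K) :
    H ≤ normalizer (centralizer (K : Set G)) :=
  le_normalizer_iff_conj_smul_eq.2 fun g hg => le_antisymm
    (by simpa only [conj_smul_eq_of_le_normalizer h hg] using
      conj_smul_le_centralizer (le_refl (centralizer (K : Set G))) g)
    (by simpa only [conj_smul_eq_of_le_normalizer h (inv_mem hg), conj_smul_inv_smul] using
      conj_smul_mono g (conj_smul_le_centralizer (le_refl (centralizer (K : Set G))) g⁻¹))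

theorem le_normalizer_sup_of_commutator_le (hHL : H ≤ normalizer L) (hHK : ⁅H, K⁆ ≤ L) :
    H ≤ normalizer (K ⊔ L : Subgroup G) := by
  have key : ∀ h ∈ H, MulAut.conj h • (K ⊔ L) ≤ K ⊔ L := by
    intro h hh
    rw [smul_sup, conj_smul_eq_of_le_normalizer hHL hh]
    refine sup_le (fun k hk => ?_) le_sup_right
    rw [mem_conj_smul] at hk
    have hcomm := hHK (commutator_mem_commutator hh hk)
    have heq : k = h * (h⁻¹ * k * h) * h⁻¹ * (h⁻¹ * k * h)⁻¹ * (h⁻¹ * k * h) := by group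
    rw [heq]
    exact mul_mem (mem_sup_right hcomm) (mem_sup_left hk)
  refine le_normalizer_iff_conj_smul_eq.2 fun h hh => le_antisymm (key h hh) ?_
  simpa only [conj_smul_inv_smul] using conj_smul_mono h (key h⁻¹ (inv_mem hh))

theorem exists_mul_eq_of_mem_sup (hL : L ≤ normalizer M) (hg : g ∈ L ⊔ M) :
    ∃ l ∈ L, ∃ m ∈ M, l * m = g := by
  rw [← SetLike.mem_coe, coe_mul_of_left_le_normalizer_right _ _ hL] at hg
  exact Set.mem_mul.1 hg

theorem le_sup_inf_of_le_sup (hK : K ≤ L ⊔ M) (hLK : L ≤ K) (hL : L ≤ normalizer M) :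
    K ≤ L ⊔ K ⊓ M := by
  intro k hk
  obtain ⟨l, hl, m, hm, rfl⟩ := exists_mul_eq_of_mem_sup hL (hK hk)
  exact mul_mem_sup hl ⟨(mul_mem_cancel_left (hLK hl)).1 hk, hm⟩

theorem commutator_le_of_le_sup (hK : K ≤ L ⊔ M) (hL : L ≤ normalizer M)
    (hM : M ≤ centralizer H) : ⁅H, K⁆ ≤ ⁅H, L⁆ := by
  refine commutator_le.2 fun h hh k hk => ?_
  obtain ⟨l, hl, m, hm, rfl⟩ := exists_mul_eq_of_mem_sup hL (hK hk)
  rw [commutatorElement_mul_right_eq_mul_conj,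
    commutatorElement_eq_one_iff_mul_comm.2 (hM hm h hh), mul_one, mul_inv_cancel_right]
  exact commutator_mem_commutator hh hl

theorem commutator_self_eq_of_le_sup (hK : K ≤ L ⊔ M) (hLK : L ≤ K) (hM : K ≤ centralizer M) :
    ⁅K, K⁆ = ⁅L, L⁆ := by
  have hcomm : ∀ H ≤ K, ⁅H, K⁆ ≤ ⁅H, L⁆ := fun H hH =>
    commutator_le_of_le_sup hK (le_normalizer_of_le_centralizer (hLK.trans hM))
      (le_centralizer_iff.1 (hH.trans hM))
  refine le_antisymm ((hcomm K le_rfl).trans ?_) (commutator_mono hLK hLK)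
  rw [commutator_comm]
  exact hcomm L hLK

end Conjugation

section RelSubnormal

open Subgroup

variable {G : Type*} [Group G]

/-- `RelSubnormal A L`: the subgroup `A` is subnormal in `L`, both being subgroups of the ambient
group. This is `Subgroup.IsSubnormal` relative to `L`, phrased without passing to the subtype. -/
inductive RelSubnormal : Subgroup G → Subgroup G → Prop
  | refl (A : Subgroup G) : RelSubnormal A A
  | step {A B C : Subgroup G} :
      RelSubnormal A B → B ≤ C → C ≤ normalizer B → RelSubnormal A C

namespace RelSubnormal

variable {A B L : Subgroup G}

theorem le (h : RelSubnormal A L) : A ≤ L := by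
  induction h with
  | refl => exact le_rfl
  | step _ h _ ih => exact ih.trans h

theorem trans (h : RelSubnormal A B) (h' : RelSubnormal B L) : RelSubnormal A L := by
  induction h' with
  | refl => exact h
  | step _ h₁ h₂ ih => exact .step ih h₁ h₂

theorem of_le_normalizer (h : A ≤ L) (h' : L ≤ normalizer A) : RelSubnormal A L :=
  .step (.refl A) h h'

theorem inf (h : RelSubnormal A L) (K : Subgroup G) : RelSubnormal (A ⊓ K) (L ⊓ K) := by
  induction h with
  | refl => exact .refl _
  | step _ h₁ h₂ ih =>
    exact .step ih (inf_le_inf_right _ h₁)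
      (le_normalizer_inf (inf_le_left.trans h₂) (inf_le_right.trans le_normalizer))

theorem restrict (h : RelSubnormal A L) (hAB : A ≤ B) (hBL : B ≤ L) : RelSubnormal A B := by
  simpa only [inf_eq_left.2 hAB, inf_eq_right.2 hBL] using h.inf B

theorem conj_smul (h : RelSubnormal A L) (g : G) :
    RelSubnormal (MulAut.conj g • A) (MulAut.conj g • L) := by
  induction h with
  | refl => exact .refl _
  | step _ h₁ h₂ ih => exact .step ih (conj_smul_mono g h₁) (conj_smul_le_normalizer h₂ g)

theorem exists_lt (h : RelSubnormal A L) (hne : A ≠ L) :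
    ∃ B, RelSubnormal A B ∧ B < L ∧ L ≤ normalizer B := by
  induction h with
  | refl => exact absurd rfl hne
  | @step B C h₀ h₁ h₂ ih =>
    obtain rfl | hBC := eq_or_ne B C
    · exact ih hne
    · exact ⟨B, h₀, lt_of_le_of_ne h₁ hBC, h₂⟩

end RelSubnormal

theorem eq_bot_or_eq_of_le_normalizer {K M : Subgroup G} [IsSimpleGroup M] (hKM : K ≤ M)
    (hMK : M ≤ normalizer K) : K = ⊥ ∨ K = M :=
  (Subgroup.isSimpleGroup_iff.1 ‹_›).2 K hKM ((normal_subgroupOf_iff_le_normalizer hKM).2 hMK)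

theorem commutator_eq_self_or_isPGroup (M : Subgroup G) [IsSimpleGroup M] :
    ⁅M, M⁆ = M ∨ ∃ p : ℕ, p.Prime ∧ IsPGroup p M := by
  refine (eq_bot_or_eq_of_le_normalizer (K := ⁅M, M⁆) (commutator_le_self M)
    (normalizer_commutator_ge_left M M)).symm.imp_right fun hM => ?_
  rw [commutator_eq_bot_iff_le_centralizer] at hM
  let : CommGroup M := { mul_comm := fun a b => Subtype.ext (hM b.2 a a.2) }
  exact ⟨_, IsSimpleGroup.prime_card (α := M), IsPGroup.of_card (pow_one _).symm⟩

variable [Finite G]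

/- Wielandt: let `X ≤ X₁ ⊲ L` and `M ≤ M₁ ⊲ L` be proper. By induction inside `M₁`, either
`M ≤ X₁`, or `M` centralises `X₁ ⊓ M₁ ≥ ⁅M, X₁⁆`, and then the three subgroups lemma shows that
`M = ⁅M, M⁆` centralises `X₁`. -/
theorem RelSubnormal.le_or_le_centralizer {M X L : Subgroup G} [IsSimpleGroup M]
    (hperf : ⁅M, M⁆ = M) (hM : RelSubnormal M L) (hX : RelSubnormal X L) :
    M ≤ X ∨ M ≤ centralizer X := by
  induction L using WellFoundedLT.induction generalizing X with
  | ind L ih =>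
  obtain rfl | hXL := eq_or_ne X L
  · exact .inl hM.le
  obtain ⟨X₁, hXX₁, hX₁, hLX₁⟩ := hX.exists_lt hXL
  by_cases hMX₁ : M ≤ X₁
  · exact ih X₁ hX₁ (hM.restrict hMX₁ hX₁.le) hXX₁
  right
  obtain rfl | hML := eq_or_ne M L
  · obtain rfl | rfl := eq_bot_or_eq_of_le_normalizer hX₁.le hLX₁
    · rw [le_centralizer_iff]
      exact hXX₁.le.trans bot_le
    · exact absurd hX₁ (lt_irrefl _)
  obtain ⟨M₁, hMM₁, hM₁, hLM₁⟩ := hM.exists_lt hML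
  have hinf : RelSubnormal (X₁ ⊓ M₁) M₁ :=
    .of_le_normalizer inf_le_right (le_normalizer_inf (hM₁.le.trans hLX₁) le_normalizer)
  have hcen : M ≤ centralizer (X₁ ⊓ M₁ : Subgroup G) :=
    (ih M₁ hM₁ hMM₁ hinf).resolve_left fun h => hMX₁ (h.trans inf_le_left)
  have hcomm : ⁅M, X₁⁆ ≤ X₁ ⊓ M₁ :=
    le_inf (le_normalizer_iff_commutator_le_right.1 (hM.le.trans hLX₁))
      ((commutator_mono hMM₁.le le_rfl).trans
        (le_normalizer_iff_commutator_le_left.1 (hX₁.le.trans hLM₁)))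
  have hrot : ⁅⁅M, X₁⁆, M⁆ = ⊥ :=
    commutator_eq_bot_iff_le_centralizer.2 (hcomm.trans (le_centralizer_iff.1 hcen))
  have hMM : ⁅⁅M, M⁆, X₁⁆ = ⊥ :=
    commutator_commutator_eq_bot_of_rotate hrot (by rwa [commutator_comm X₁ M])
  rw [hperf, commutator_eq_bot_iff_le_centralizer, le_centralizer_iff] at hMM
  exact le_centralizer_iff.1 (hXX₁.le.trans hMM)

theorem exists_isSimpleGroup_relSubnormal {P : Subgroup G} (hP : P ≠ ⊥) :
    ∃ M, RelSubnormal M P ∧ IsSimpleGroup M := by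
  obtain ⟨M, hM⟩ := Set.Finite.exists_minimal (s := {M : Subgroup G | RelSubnormal M P ∧ M ≠ ⊥})
    (Set.toFinite _) ⟨P, .refl P, hP⟩
  refine ⟨M, hM.prop.1, Subgroup.isSimpleGroup_iff.2 ⟨hM.prop.2, fun K hKM hK => ?_⟩⟩
  rw [normal_subgroupOf_iff_le_normalizer hKM] at hK
  refine or_iff_not_imp_left.2 fun hK₀ => le_antisymm hKM (hM.le_of_le ⟨?_, hK₀⟩ hKM)
  exact (RelSubnormal.of_le_normalizer hKM hK).trans hM.prop.1

end RelSubnormal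

section PCore

open Subgroup

variable {G : Type*} [Group G]

/-- `pCore p L` is `O_p(L)`, the largest normal `p`-subgroup of `L`, as a subgroup of the ambient
group. -/
def pCore (p : ℕ) (L : Subgroup G) : Subgroup G :=
  sSup {K | K ≤ L ∧ L ≤ normalizer K ∧ IsPGroup p K}

variable {p : ℕ} {H K L : Subgroup G}

theorem pCore_le (p : ℕ) (L : Subgroup G) : pCore p L ≤ L :=
  sSup_le fun _ hK => hK.1

theorem le_pCore (hKL : K ≤ L) (hLK : L ≤ normalizer K) (hK : IsPGroup p K) : K ≤ pCore p L :=
  le_sSup ⟨hKL, hLK, hK⟩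

theorem conj_smul_pCore (p : ℕ) (L : Subgroup G) (g : G) :
    MulAut.conj g • pCore p L = pCore p (MulAut.conj g • L) := by
  have key : ∀ (g : G) (L : Subgroup G),
      MulAut.conj g • pCore p L ≤ pCore p (MulAut.conj g • L) := by
    intro g L
    rw [pCore, sSup_eq_iSup', conj_smul_iSup]
    refine iSup_le fun K => ?_
    exact le_pCore (conj_smul_mono g K.2.1) (conj_smul_le_normalizer K.2.2.1 g) (K.2.2.2.map _)
  refine le_antisymm (key g L) ?_
  simpa only [conj_smul_inv_smul, conj_inv_smul_smul] using
    conj_smul_mono g (key g⁻¹ (MulAut.conj g • L))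

theorem le_normalizer_pCore_of_le_normalizer (h : H ≤ normalizer L) (p : ℕ) :
    H ≤ normalizer (pCore p L) := by
  rw [le_normalizer_iff_conj_smul_eq] at h ⊢
  intro g hg
  rw [conj_smul_pCore, h g hg]

theorem le_normalizer_pCore (p : ℕ) (L : Subgroup G) : L ≤ normalizer (pCore p L) :=
  le_normalizer_pCore_of_le_normalizer le_normalizer p

variable [Finite G]

theorem isPGroup_pCore (p : ℕ) (L : Subgroup G) : IsPGroup p (pCore p L) := by
  obtain ⟨M, hM⟩ := Set.Finite.exists_maximal
    (s := {K : Subgroup G | K ≤ L ∧ L ≤ normalizer K ∧ IsPGroup p K})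
    (Set.toFinite _) ⟨⊥, bot_le, by rw [normalizer_eq_top]; exact le_top, IsPGroup.of_bot⟩
  obtain ⟨hML, hLM, hMp⟩ := hM.prop
  suffices h : pCore p L ≤ M from hMp.to_le h
  refine sSup_le fun K ⟨hKL, hLK, hKp⟩ => le_sup_left.trans (hM.le_of_ge ?_ le_sup_right)
  exact ⟨sup_le hKL hML, le_normalizer_sup hLK hLM,
    hKp.to_sup_of_normal_right' hMp (hKL.trans hLM)⟩

theorem RelSubnormal.pCore_le_pCore (h : RelSubnormal K L) (p : ℕ) : pCore p K ≤ pCore p L := by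
  induction h with
  | refl => exact le_rfl
  | step _ hle hnorm ih =>
    exact ih.trans (le_pCore ((pCore_le p _).trans hle)
      (le_normalizer_pCore_of_le_normalizer hnorm p) (isPGroup_pCore p _))

theorem RelSubnormal.le_pCore (h : RelSubnormal K L) (hK : IsPGroup p K) : K ≤ pCore p L :=
  (_root_.le_pCore le_rfl le_normalizer hK).trans (h.pCore_le_pCore p)

theorem pCore_inf_le (p : ℕ) (h : K ≤ L) : pCore p L ⊓ K ≤ pCore p K :=
  _root_.le_pCore inf_le_right (le_normalizer_inf (h.trans (le_normalizer_pCore p L)) le_normalizer)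
    ((isPGroup_pCore p L).to_le inf_le_left)

end PCore

section Permutations

theorem exists_perm_map_eq {α : Type*} {l l' : List α} (hl : l.Nodup) (hl' : l'.Nodup)
    (h : l.length = l'.length) : ∃ σ : Equiv.Perm α, l.map σ = l' := by
  obtain ⟨σ, hσ⟩ := Equiv.Perm.exists_extending_pair l.get (l'.get ∘ Fin.cast h)
    (List.nodup_iff_injective_get.1 hl)
    ((List.nodup_iff_injective_get.1 hl').comp (Fin.cast_injective h))
  refine ⟨σ, List.ext_get (by simpa using h) fun i h₁ h₂ => ?_⟩
  simpa using hσ ⟨i, by simpa using h₁⟩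

theorem exists_fin_notMem {n : ℕ} {s : Finset (Fin n)} (hs : s.card < n) : ∃ d, d ∉ s := by
  by_contra! h
  have := Finset.card_le_card fun d (_ : d ∈ Finset.univ) => h d
  rw [Finset.card_univ, Fintype.card_fin] at this
  omega

theorem exists_fin_ne_ne {n : ℕ} (hn : 3 ≤ n) (a b : Fin n) : ∃ c, c ≠ a ∧ c ≠ b := by
  obtain ⟨c, hc⟩ := exists_fin_notMem (s := {a, b}) (Finset.card_le_two.trans_lt (by omega))
  exact ⟨c, by simpa only [Finset.mem_insert, Finset.mem_singleton, not_or] using hc⟩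

end Permutations

section LocalAction

open Subgroup

variable {G V : Type*} [Group G] [MulAction G V] {n : ℕ} {ℓ : Fin n → Fin n → V} {g h : G}
  {σ τ : Equiv.Perm (Fin n)}

/-- The group element `g` permutes the vertices `ℓ a b` with `a ≠ b` in the way `σ` permutes the
ordered pairs `(a, b)`. -/
def ActsAs (ℓ : Fin n → Fin n → V) (g : G) (σ : Equiv.Perm (Fin n)) : Prop :=
  ∀ a b, a ≠ b → g • ℓ a b = ℓ (σ a) (σ b)

theorem ActsAs.mul (hg : ActsAs ℓ g σ) (hh : ActsAs ℓ h τ) : ActsAs ℓ (g * h) (σ * τ) := by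
  intro a b hab
  rw [mul_smul, hh a b hab, hg _ _ (τ.injective.ne hab)]
  rfl

theorem ActsAs.inv (hg : ActsAs ℓ g σ) : ActsAs ℓ g⁻¹ σ⁻¹ := by
  intro a b hab
  rw [inv_smul_eq_iff, hg _ _ (σ⁻¹.injective.ne hab)]
  simp

theorem ActsAs.one (ℓ : Fin n → Fin n → V) : ActsAs ℓ (1 : G) 1 := fun _ _ _ => one_smul G _

theorem ActsAs.pow (hg : ActsAs ℓ g σ) (k : ℕ) : ActsAs ℓ (g ^ k) (σ ^ k) := by
  induction k with
  | zero => simpa only [pow_zero] using .one ℓ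
  | succ k ih => simpa only [pow_succ] using ih.mul hg

theorem ActsAs.conj (hg : ActsAs ℓ g σ) (hh : ActsAs ℓ h τ) :
    ActsAs ℓ (h * g * h⁻¹) (τ * σ * τ⁻¹) :=
  (hh.mul hg).mul hh.inv

/-- `ℓ` labels the neighbours of `x` by the ordered pairs of distinct elements of `Fin n`, in such
a way that the stabiliser of `x` induces exactly `Sym(n)`. The values `ℓ a a` are irrelevant. -/
structure IsPairLabelling (G : Type*) {V : Type*} [Group G] [MulAction G V] (Γ : SimpleGraph V)
    {n : ℕ} (x : V) (ℓ : Fin n → Fin n → V) : Prop where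
  adj : ∀ a b, a ≠ b → Γ.Adj x (ℓ a b)
  inj : ∀ a b c d, a ≠ b → c ≠ d → ℓ a b = ℓ c d → a = c ∧ b = d
  surj : ∀ y, Γ.Adj x y → ∃ a b, a ≠ b ∧ ℓ a b = y
  exists_perm : ∀ g : G, g • x = x → ∃ σ, ActsAs ℓ g σ
  exists_actsAs : ∀ σ, ∃ g : G, g • x = x ∧ ActsAs ℓ g σ

/-- A locally `L` pair `(Γ, G)`, for `L` the group induced by `Sym(n)` on ordered pairs, with `G` an
abstract group acting faithfully on the connected graph `Γ`. -/
structure LocPair (G : Type*) {V : Type*} [Group G] [MulAction G V] (Γ : SimpleGraph V) (n : ℕ) :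
    Prop where
  connected : Γ.Connected
  faithful : ∀ g : G, (∀ v : V, g • v = v) → g = 1
  adj : ∀ (g : G) (u v : V), Γ.Adj u v → Γ.Adj (g • u) (g • v)
  exists_smul_eq : ∀ u v : V, ∃ g : G, g • u = v
  exists_labelling : ∀ x : V, ∃ ℓ : Fin n → Fin n → V, IsPairLabelling G Γ x ℓ

/-- The stabiliser `G_{xy}` of the arc `(x, y)`. -/
abbrev arcStab (G : Type*) {V : Type*} [Group G] [MulAction G V] (x y : V) : Subgroup G :=
  stabilizer G x ⊓ stabilizer G y

/-- `G_x^{[1]}`, the pointwise stabiliser of `x` and of all neighbours of `x`. -/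
def localKernel (G : Type*) {V : Type*} [Group G] [MulAction G V] (Γ : SimpleGraph V) (x : V) :
    Subgroup G :=
  stabilizer G x ⊓ ⨅ (z : V) (_ : Γ.Adj x z), stabilizer G z

/-- `B` is normal in the arc stabiliser `G_{xu}` and acts nontrivially on the neighbours of `x`. -/
structure ActiveNormal (Γ : SimpleGraph V) (x u : V) (B : Subgroup G) : Prop where
  le_arcStab : B ≤ arcStab G x u
  arcStab_le_normalizer : arcStab G x u ≤ normalizer B
  not_le : ¬ B ≤ localKernel G Γ x

variable {Γ : SimpleGraph V} {x y u : V}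

theorem mem_localKernel : g ∈ localKernel G Γ x ↔ g • x = x ∧ ∀ z, Γ.Adj x z → g • z = z := by
  simp only [localKernel, mem_inf, mem_iInf, mem_stabilizer_iff]

theorem mem_arcStab : g ∈ arcStab G x y ↔ g • x = x ∧ g • y = y := Iff.rfl

theorem arcStab_comm (x y : V) : arcStab G x y = arcStab G y x := inf_comm _ _

theorem localKernel_le_stabilizer (x : V) : localKernel G Γ x ≤ stabilizer G x := inf_le_left

theorem localKernel_le_arcStab (h : Γ.Adj x y) : localKernel G Γ x ≤ arcStab G x y :=
  fun _ hg => ⟨hg.1, (mem_localKernel.1 hg).2 y h⟩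

theorem localKernel_le_arcStab' (h : Γ.Adj x y) : localKernel G Γ y ≤ arcStab G x y :=
  (localKernel_le_arcStab h.symm).trans (arcStab_comm y x).le

theorem conj_smul_stabilizer (g : G) (x : V) :
    MulAut.conj g • stabilizer G x = stabilizer G (g • x) :=
  (stabilizer_smul_eq_stabilizer_map_conj g x).symm

theorem conj_smul_arcStab (g : G) (x y : V) :
    MulAut.conj g • arcStab G x y = arcStab G (g • x) (g • y) := by
  rw [smul_inf, conj_smul_stabilizer, conj_smul_stabilizer]

theorem stabilizer_le_normalizer_of_equivariant {F : V → Subgroup G}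
    (hF : ∀ (g : G) x, MulAut.conj g • F x = F (g • x)) (x : V) :
    stabilizer G x ≤ normalizer (F x) :=
  le_normalizer_iff_conj_smul_eq.2 fun g hg => by rw [hF, mem_stabilizer_iff.1 hg]

theorem arcStab_le_normalizer_of_equivariant {F : V → V → Subgroup G}
    (hF : ∀ (g : G) x y, MulAut.conj g • F x y = F (g • x) (g • y)) (x y : V) :
    arcStab G x y ≤ normalizer (F x y) :=
  le_normalizer_iff_conj_smul_eq.2 fun g hg => by
    rw [hF, mem_stabilizer_iff.1 hg.1, mem_stabilizer_iff.1 hg.2]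

namespace IsPairLabelling

variable (hl : IsPairLabelling G Γ x ℓ) {a b : Fin n}

include hl

theorem swap : IsPairLabelling G Γ x fun a b => ℓ b a where
  adj a b hab := hl.adj b a hab.symm
  inj a b c d hab hcd he := (hl.inj b a d c hab.symm hcd.symm he).symm
  surj y hy :=
    let ⟨a, b, hab, he⟩ := hl.surj y hy
    ⟨b, a, hab.symm, he⟩
  exists_perm g hg := (hl.exists_perm g hg).imp fun _ hσ a b hab => hσ b a hab.symm
  exists_actsAs σ :=
    let ⟨g, hg, hσ⟩ := hl.exists_actsAs σ
    ⟨g, hg, fun a b hab => hσ b a hab.symm⟩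

theorem mem_localKernel_iff : g ∈ localKernel G Γ x ↔ g • x = x ∧ ActsAs ℓ g 1 := by
  rw [mem_localKernel]
  refine and_congr_right fun _ => ⟨fun h a b hab => h _ (hl.adj a b hab), fun h z hz => ?_⟩
  obtain ⟨a, b, hab, rfl⟩ := hl.surj z hz
  exact h a b hab

theorem actsAs_unique (hn : 2 ≤ n) (hσ : ActsAs ℓ g σ) (hτ : ActsAs ℓ g τ) : σ = τ := by
  ext a
  have : Nontrivial (Fin n) := Fin.nontrivial_iff_two_le.2 hn
  obtain ⟨b, hba⟩ := exists_ne a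
  have he := (hσ a b hba.symm).symm.trans (hτ a b hba.symm)
  rw [(hl.inj _ _ _ _ (σ.injective.ne hba.symm) (τ.injective.ne hba.symm) he).1]

theorem apply_eq_of_smul_eq (hσ : ActsAs ℓ g σ) (hab : a ≠ b) (h : g • ℓ a b = ℓ a b) :
    σ a = a ∧ σ b = b := by
  rw [hσ a b hab] at h
  exact hl.inj _ _ _ _ (σ.injective.ne hab) hab h

/-- `G_{xu}` induces the full symmetric group on the points other than `a` and `b`, where
`u = ℓ a b`, so the conjugates of a nontrivial permutation in `B` reach every pair. -/
theorem exists_mem_apply_eq {c c' : Fin n} (hab : a ≠ b) (hca : c ≠ a) (hcb : c ≠ b)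
    (hca' : c' ≠ a) (hcb' : c' ≠ b) (hcc : c ≠ c') {B : Subgroup G}
    (hB : ActiveNormal Γ x (ℓ a b) B) :
    ∃ g ∈ B, ∃ σ, ActsAs ℓ g σ ∧ σ a = a ∧ σ b = b ∧ σ c = c' := by
  obtain ⟨g, hg, hgx⟩ := Set.not_subset.1 hB.not_le
  have hgab := hB.le_arcStab hg
  obtain ⟨σ, hσ⟩ := hl.exists_perm g hgab.1
  obtain ⟨ha, hb⟩ := hl.apply_eq_of_smul_eq hσ hab hgab.2
  obtain ⟨d, hd⟩ : ∃ d, σ d ≠ d := by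
    by_contra! hσ₁
    obtain rfl : σ = 1 := Equiv.ext hσ₁
    exact hgx (hl.mem_localKernel_iff.2 ⟨hgab.1, hσ⟩)
  have hda : d ≠ a := fun h => hd (by rw [h, ha])
  have hdb : d ≠ b := fun h => hd (by rw [h, hb])
  have hea : σ d ≠ a := fun h => hda (σ.injective (h.trans ha.symm))
  have heb : σ d ≠ b := fun h => hdb (σ.injective (h.trans hb.symm))
  obtain ⟨τ, hτ⟩ := exists_perm_map_eq (l := [a, b, d, σ d]) (l' := [a, b, c, c'])
    (by simp [hab, hda.symm, hdb.symm, hea.symm, heb.symm, hd.symm])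
    (by simp [hab, hca.symm, hcb.symm, hca'.symm, hcb'.symm, hcc]) rfl
  simp only [List.map_cons, List.map_nil, List.cons.injEq, and_true] at hτ
  obtain ⟨τa, τb, τd, τσd⟩ := hτ
  obtain ⟨k, hk, hkτ⟩ := hl.exists_actsAs τ
  have hkab : k ∈ arcStab G x (ℓ a b) :=
    mem_arcStab.2 ⟨hk, by rw [hkτ a b hab, τa, τb]⟩
  refine ⟨k * g * k⁻¹, conj_mem_of_le_normalizer hB.arcStab_le_normalizer hkab hg,
    τ * σ * τ⁻¹, hσ.conj hkτ, ?_, ?_, ?_⟩ <;> rw [Equiv.Perm.mul_apply, Equiv.Perm.mul_apply]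
  · rw [Equiv.Perm.inv_eq_iff_eq.2 τa.symm, ha, τa]
  · rw [Equiv.Perm.inv_eq_iff_eq.2 τb.symm, hb, τb]
  · rw [Equiv.Perm.inv_eq_iff_eq.2 τd.symm, τσd]

theorem right_of_activeNormal (hn : 4 ≤ n) {E : V → Prop}
    (hE : ∀ u, Γ.Adj x u → ∃ B : Subgroup G, ActiveNormal Γ x u B ∧
      ∀ g ∈ B, ∀ z, Γ.Adj x z → E z → E (g • z))
    {c d d' : Fin n} (hcd : c ≠ d) (hcd' : c ≠ d') (h : E (ℓ c d)) : E (ℓ c d') := by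
  obtain rfl | hdd := eq_or_ne d d'
  · exact h
  obtain ⟨f, hf⟩ := exists_fin_notMem (s := {c, d, d'}) (Finset.card_le_three.trans_lt hn)
  simp only [Finset.mem_insert, Finset.mem_singleton, not_or] at hf
  obtain ⟨hfc, hfd, hfd'⟩ := hf
  obtain ⟨B, hB, hBE⟩ := hE _ (hl.adj c f (Ne.symm hfc))
  obtain ⟨g, hg, σ, hσ, σc, -, σd⟩ := hl.exists_mem_apply_eq (Ne.symm hfc) hcd.symm
    (Ne.symm hfd) hcd'.symm (Ne.symm hfd') hdd hB
  simpa only [hσ c d hcd, σc, σd] using hBE g hg _ (hl.adj c d hcd) h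

end IsPairLabelling

theorem connected_induction (hc : Γ.Connected) {S : V → Prop} (hx : S x)
    (hS : ∀ u v, S u → Γ.Adj u v → S v) (v : V) : S v := by
  obtain ⟨w⟩ := hc.preconnected x v
  induction w with
  | nil => exact hx
  | cons h _ ih => exact ih (hS _ _ hx h)

namespace LocPair

variable (hL : LocPair G Γ n)

include hL

theorem adj_smul_iff (g : G) (u v : V) : Γ.Adj (g • u) (g • v) ↔ Γ.Adj u v :=
  ⟨fun h => by simpa only [inv_smul_smul] using hL.adj g⁻¹ _ _ h, hL.adj g u v⟩

theorem adj_inv_smul_iff (g : G) (u v : V) : Γ.Adj u (g⁻¹ • v) ↔ Γ.Adj (g • u) v := by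
  rw [← hL.adj_smul_iff g, smul_inv_smul]

theorem adj_smul_of_smul_eq (hg : g • x = x) (hxy : Γ.Adj x y) : Γ.Adj x (g • y) := by
  simpa only [hg] using hL.adj g _ _ hxy

theorem conj_smul_localKernel (g : G) (x : V) :
    MulAut.conj g • localKernel G Γ x = localKernel G Γ (g • x) := by
  have key : ∀ (g : G) x, MulAut.conj g • localKernel G Γ x ≤ localKernel G Γ (g • x) := by
    intro g x h hh
    rw [mem_conj_smul, mem_localKernel, mul_smul, mul_smul, inv_smul_eq_iff] at hh
    refine mem_localKernel.2 ⟨hh.1, fun z hz => ?_⟩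
    have hz := hh.2 (g⁻¹ • z) ((hL.adj_inv_smul_iff g x z).2 hz)
    rwa [mul_smul, mul_smul, smul_inv_smul, smul_left_cancel_iff] at hz
  refine le_antisymm (key g x) ?_
  simpa only [conj_smul_inv_smul, inv_smul_smul] using conj_smul_mono g (key g⁻¹ (g • x))

theorem stabilizer_le_normalizer_localKernel (x : V) :
    stabilizer G x ≤ normalizer (localKernel G Γ x) :=
  stabilizer_le_normalizer_of_equivariant hL.conj_smul_localKernel x

theorem exists_smul_eq_of_adj {y' : V} (hy : Γ.Adj x y) (hy' : Γ.Adj x y') :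
    ∃ g : G, g • x = x ∧ g • y = y' := by
  obtain ⟨ℓ, hl⟩ := hL.exists_labelling x
  obtain ⟨a, b, hab, rfl⟩ := hl.surj y hy
  obtain ⟨c, d, hcd, rfl⟩ := hl.surj y' hy'
  obtain ⟨σ, hσ⟩ := exists_perm_map_eq (l := [a, b]) (l' := [c, d])
    (by simp [hab]) (by simp [hcd]) rfl
  simp only [List.map_cons, List.map_nil, List.cons.injEq, and_true] at hσ
  obtain ⟨g, hg, hgσ⟩ := hl.exists_actsAs σ
  exact ⟨g, hg, by rw [hgσ a b hab, hσ.1, hσ.2]⟩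

theorem exists_smul_arc_eq {x' y' : V} (h : Γ.Adj x y) (h' : Γ.Adj x' y') :
    ∃ g : G, g • x = x' ∧ g • y = y' := by
  obtain ⟨g, rfl⟩ := hL.exists_smul_eq x x'
  obtain ⟨k, hk, hky⟩ := hL.exists_smul_eq_of_adj (hL.adj g _ _ h) h'
  exact ⟨k * g, by rw [mul_smul, hk], by rw [mul_smul, hky]⟩

theorem exists_adj (hn : 2 ≤ n) (x : V) : ∃ y, Γ.Adj x y := by
  obtain ⟨ℓ, hl⟩ := hL.exists_labelling x
  exact ⟨_, hl.adj ⟨0, by omega⟩ ⟨1, by omega⟩ (by simp [Fin.ext_iff])⟩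

theorem exists_mem_smul_eq_or (hxy : Γ.Adj x y) {D : Subgroup G} (hDx : stabilizer G x ≤ D)
    (hDy : stabilizer G y ≤ D) (v : V) : ∃ d ∈ D, v = d • x ∨ v = d • y := by
  refine connected_induction hL.connected (S := fun v => ∃ d ∈ D, v = d • x ∨ v = d • y)
    ⟨1, D.one_mem, .inl (one_smul G x).symm⟩ ?_ v
  have step : ∀ {x y}, Γ.Adj x y → stabilizer G x ≤ D → ∀ d ∈ D, ∀ v, Γ.Adj (d • x) v →
      ∃ e ∈ D, v = e • y := by
    intro x y hxy hDx d hd v hv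
    obtain ⟨g, hg, hgv⟩ := hL.exists_smul_eq_of_adj hxy ((hL.adj_inv_smul_iff d x v).2 hv)
    exact ⟨d * g, D.mul_mem hd (hDx hg), by rw [mul_smul, hgv, smul_inv_smul]⟩
  rintro u v ⟨d, hd, rfl | rfl⟩ huv
  · exact (step hxy hDx d hd v huv).imp fun _ he => he.imp_right .inr
  · exact (step hxy.symm hDy d hd v huv).imp fun _ he => he.imp_right .inl

theorem eq_bot_of_le_normalizer (hxy : Γ.Adj x y) {X : Subgroup G} (hX : X ≤ arcStab G x y)
    (hx : stabilizer G x ≤ normalizer X) (hy : stabilizer G y ≤ normalizer X) : X = ⊥ := by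
  refine (eq_bot_iff_forall X).2 fun k hk => hL.faithful k fun v => ?_
  obtain ⟨d, hd, hv⟩ := hL.exists_mem_smul_eq_or hxy hx hy v
  rw [← conj_smul_eq_of_le_normalizer le_rfl hd] at hk
  have hk := conj_smul_mono d hX hk
  rw [conj_smul_arcStab] at hk
  obtain rfl | rfl := hv
  exacts [hk.1, hk.2]

theorem forall_adj_of_activeNormal (hn : 4 ≤ n) {E : V → Prop}
    (hE : ∀ u, Γ.Adj x u → ∃ B : Subgroup G, ActiveNormal Γ x u B ∧
      ∀ g ∈ B, ∀ z, Γ.Adj x z → E z → E (g • z))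
    {z z' : V} (hz : Γ.Adj x z) (hz' : Γ.Adj x z') (h : E z) : E z' := by
  obtain ⟨ℓ, hl⟩ := hL.exists_labelling x
  obtain ⟨a, b, hab, rfl⟩ := hl.surj z hz
  obtain ⟨c, d, hcd, rfl⟩ := hl.surj z' hz'
  obtain ⟨f, hf⟩ := exists_fin_notMem (s := {a, c}) (Finset.card_le_two.trans_lt (by omega))
  simp only [Finset.mem_insert, Finset.mem_singleton, not_or] at hf
  have haf : E (ℓ a f) := hl.right_of_activeNormal hn hE hab (Ne.symm hf.1) h
  have hcf : E (ℓ c f) := hl.swap.right_of_activeNormal hn hE hf.1 hf.2 haf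
  exact hl.right_of_activeNormal hn hE (Ne.symm hf.2) hcd hcf

theorem stabilizer_le_of_activeNormal (hn : 4 ≤ n) (hxy : Γ.Adj x y) {Q : Subgroup G}
    (hQ : arcStab G x y ≤ Q)
    (hB : ∀ u, Γ.Adj x u → ∃ B : Subgroup G, ActiveNormal Γ x u B ∧ B ≤ Q) :
    stabilizer G x ≤ Q := by
  intro g hg
  obtain ⟨q, hq, hqx, hqy⟩ : ∃ q ∈ Q, q • x = x ∧ q • y = g • y := by
    refine hL.forall_adj_of_activeNormal hn (x := x) (E := fun z => ∃ q ∈ Q, q • x = x ∧ q • y = z)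
      (fun u hu => ?_) hxy (hL.adj_smul_of_smul_eq hg hxy) ⟨1, Q.one_mem, by simp, by simp⟩
    obtain ⟨B, hBu, hBQ⟩ := hB u hu
    refine ⟨B, hBu, ?_⟩
    rintro k hk z - ⟨q, hq, hqx, rfl⟩
    refine ⟨k * q, Q.mul_mem (hBQ hk) hq, ?_, mul_smul _ _ _⟩
    rw [mul_smul, hqx, (hBu.le_arcStab hk).1]
  have hqg : q⁻¹ * g ∈ arcStab G x y := by
    simp only [mem_arcStab, mul_smul, inv_smul_eq_iff, hqx, hqy, and_true]
    exact hg
  simpa only [mul_inv_cancel_left] using Q.mul_mem hq (hQ hqg)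

theorem eq_bot_of_activeNormal (hn : 4 ≤ n) (hxy : Γ.Adj x y) {X : Subgroup G}
    (hX : X ≤ arcStab G x y) (hN : arcStab G x y ≤ normalizer X)
    (hx : ∀ u, Γ.Adj x u → ∃ B : Subgroup G, ActiveNormal Γ x u B ∧ B ≤ normalizer X)
    (hy : ∀ u, Γ.Adj y u → ∃ B : Subgroup G, ActiveNormal Γ y u B ∧ B ≤ normalizer X) : X = ⊥ :=
  hL.eq_bot_of_le_normalizer hxy hX (hL.stabilizer_le_of_activeNormal hn hxy hN hx)
    (hL.stabilizer_le_of_activeNormal hn hxy.symm (by rwa [arcStab_comm]) hy)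

end LocPair

theorem LocPair.arcStab_eq_bot (hL : LocPair G Γ 3) (hxy : Γ.Adj x y) : arcStab G x y = ⊥ := by
  have key : ∀ x y, Γ.Adj x y → arcStab G x y = localKernel G Γ x := by
    refine fun x y hxy => le_antisymm (fun g hg => ?_) (localKernel_le_arcStab hxy)
    obtain ⟨ℓ, hl⟩ := hL.exists_labelling x
    obtain ⟨a, b, hab, rfl⟩ := hl.surj y hxy
    obtain ⟨σ, hσ⟩ := hl.exists_perm g hg.1
    obtain ⟨ha, hb⟩ := hl.apply_eq_of_smul_eq hσ hab hg.2
    have fixes_two : ∀ (a b : Fin 3) (σ : Equiv.Perm (Fin 3)),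
        a ≠ b → σ a = a → σ b = b → σ = 1 := by decide
    obtain rfl := fixes_two a b σ hab ha hb
    exact hl.mem_localKernel_iff.2 ⟨hg.1, hσ⟩
  refine hL.eq_bot_of_le_normalizer hxy le_rfl ?_ ?_
  · rw [key x y hxy]
    exact hL.stabilizer_le_normalizer_localKernel x
  · rw [arcStab_comm, key y x hxy.symm]
    exact hL.stabilizer_le_normalizer_localKernel y

end LocalAction

section PerfectComponents

open Subgroup

section Group

variable {G : Type*} [Group G]

theorem card_conj_smul (g : G) (K : Subgroup G) : Nat.card (MulAut.conj g • K :) = Nat.card K :=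
  Nat.card_congr (equivSMul (MulAut.conj g) K).toEquiv.symm

theorem le_normalizer_of_conj_smul_le {H K : Subgroup G} (h : ∀ g ∈ H, MulAut.conj g • K ≤ K) :
    H ≤ normalizer K :=
  le_normalizer_iff.2 fun g hg _ hk => h g hg (conj_mem_conj_smul hk)

theorem le_normalizer_iSup_conj_smul (H K : Subgroup G) :
    H ≤ normalizer (⨆ h : H, MulAut.conj (h : G) • K : Subgroup G) := by
  refine le_normalizer_of_conj_smul_le fun g hg => ?_
  rw [conj_smul_iSup]
  refine iSup_le fun h => ?_
  rw [← conj_mul_smul]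
  exact le_iSup_of_le ⟨g * h, mul_mem hg h.2⟩ le_rfl

theorem commutator_le_of_le_centralizer_conj_smul {M N : Subgroup G} {h : G}
    (hM : M ≤ normalizer N) (hh : h ∈ N) (hc : M ≤ centralizer (MulAut.conj h • M : Subgroup G)) :
    ⁅M, M⁆ ≤ N := by
  rw [commutator_le]
  intro a ha b hb
  obtain ⟨b', hb'⟩ : ∃ b', b' = h * b * h⁻¹ := ⟨_, rfl⟩
  have hab' : b' * a = a * b' :=
    hc ha b' (hb' ▸ conj_mem_conj_smul hb)
  have hb'N : b' ∈ normalizer (N : Set G) := hb' ▸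
    mul_mem (mul_mem (le_normalizer hh) (hM hb)) (inv_mem (le_normalizer hh))
  have hk : b⁻¹ * b' ∈ N := by
    convert mul_mem (conj_mem_of_le_normalizer hM (inv_mem hb) hh) (inv_mem hh) using 1
    rw [hb']
    group
  have hab : a * b * a⁻¹ * b⁻¹ = b' * (a * (b⁻¹ * b')⁻¹ * a⁻¹ * (b⁻¹ * b')) * b'⁻¹ := by
    calc a * b * a⁻¹ * b⁻¹ = (a * b') * (b⁻¹ * b')⁻¹ * a⁻¹ * b⁻¹ := by group
      _ = b' * (a * (b⁻¹ * b')⁻¹ * a⁻¹ * (b⁻¹ * b')) * b'⁻¹ := by rw [← hab']; group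
  rw [commutatorElement_def, hab]
  exact conj_mem_of_le_normalizer le_rfl hb'N
    (mul_mem (conj_mem_of_le_normalizer hM ha (inv_mem hk)) hk)

theorem RelSubnormal.eq_or_le_centralizer [Finite G] {M X L : Subgroup G} [IsSimpleGroup M]
    (hperf : ⁅M, M⁆ = M) (hM : RelSubnormal M L) (hX : RelSubnormal X L)
    (hcard : Nat.card X = Nat.card M) : M = X ∨ M ≤ centralizer X :=
  (hM.le_or_le_centralizer hperf hX).imp_left fun h => eq_of_le_of_card_ge h hcard.le

end Group

variable {G V : Type*} [Group G] [MulAction G V] {Γ : SimpleGraph V} {n : ℕ}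

namespace LocPair

variable (hL : LocPair G Γ n) {M : Subgroup G} {u v w x y : V}

include hL

theorem relSubnormal_localKernel_of_adj (hvw : Γ.Adj v w) (hv : RelSubnormal M (localKernel G Γ v))
    (hw : M ≤ localKernel G Γ w) : RelSubnormal M (localKernel G Γ w) := by
  refine (hv.restrict (le_inf hv.le hw) inf_le_left).trans (.of_le_normalizer inf_le_right ?_)
  exact le_normalizer_inf ((localKernel_le_arcStab' hvw).trans
    (inf_le_left.trans (hL.stabilizer_le_normalizer_localKernel v))) le_normalizer

theorem relSubnormal_conj_smul_localKernel (g : G) (hv : RelSubnormal M (localKernel G Γ v)) :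
    RelSubnormal (MulAut.conj g • M) (localKernel G Γ (g • v)) := by
  rw [← hL.conj_smul_localKernel]
  exact hv.conj_smul g

theorem relSubnormal_localKernel_of_smul {g : G} (hg : MulAut.conj g • M = M)
    (h : RelSubnormal M (localKernel G Γ (g • v))) : RelSubnormal M (localKernel G Γ v) := by
  rw [← hg, ← hL.conj_smul_localKernel] at h
  simpa only [conj_inv_smul_smul] using h.conj_smul g⁻¹

theorem conj_smul_le_localKernel_iff (g : G) :
    MulAut.conj g • M ≤ localKernel G Γ (g • v) ↔ M ≤ localKernel G Γ v := by
  rw [← hL.conj_smul_localKernel, pointwise_smul_le_pointwise_smul_iff]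

theorem exists_adj_not_relSubnormal (hM : M ≠ ⊥) (hxy : Γ.Adj x y)
    (hx : RelSubnormal M (localKernel G Γ x)) (hy : RelSubnormal M (localKernel G Γ y)) :
    ∃ v u w, RelSubnormal M (localKernel G Γ v) ∧ Γ.Adj v u ∧ RelSubnormal M (localKernel G Γ u) ∧
      Γ.Adj v w ∧ ¬ RelSubnormal M (localKernel G Γ w) := by
  by_contra! hcon
  have hall := connected_induction hL.connected
    (S := fun v => RelSubnormal M (localKernel G Γ v) ∧
      ∃ u, Γ.Adj v u ∧ RelSubnormal M (localKernel G Γ u))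
    ⟨hx, y, hxy, hy⟩ fun u v ⟨hu, z, huz, hz⟩ huv =>
      ⟨hcon u z v hu huz hz huv, u, huv.symm, hu⟩
  exact hM ((eq_bot_iff_forall M).2 fun m hm => hL.faithful m fun v => ((hall v).1.le hm).1)

variable [Finite G]

theorem localKernel_eq_of_le (h : localKernel G Γ x ≤ localKernel G Γ y) :
    localKernel G Γ x = localKernel G Γ y := by
  obtain ⟨g, rfl⟩ := hL.exists_smul_eq x y
  exact eq_of_le_of_card_ge h (by rw [← hL.conj_smul_localKernel, card_conj_smul])

variable [IsSimpleGroup M] (hperf : ⁅M, M⁆ = M)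

include hperf

theorem exists_activeNormal_le_normalizer_of_not_le (hvu : Γ.Adj v u)
    (hv : RelSubnormal M (localKernel G Γ v)) (hu : ¬ M ≤ localKernel G Γ u) :
    ∃ B : Subgroup G, ActiveNormal Γ v u B ∧ B ≤ normalizer M := by
  have hMu : M ≤ normalizer (localKernel G Γ u) := hv.le.trans <| (localKernel_le_arcStab hvu).trans
    (inf_le_right.trans (hL.stabilizer_le_normalizer_localKernel u))
  refine ⟨localKernel G Γ u, ⟨localKernel_le_arcStab' hvu,
    inf_le_right.trans (hL.stabilizer_le_normalizer_localKernel u), fun h => ?_⟩, ?_⟩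
  · exact hu (hL.localKernel_eq_of_le h ▸ hv.le)
  refine le_normalizer_iff_conj_smul_eq.2 fun g hg => ?_
  have hgv : RelSubnormal (MulAut.conj g • M) (localKernel G Γ v) := by
    simpa only [(mem_localKernel.1 hg).2 v hvu.symm] using
      hL.relSubnormal_conj_smul_localKernel g hv
  refine ((hv.eq_or_le_centralizer hperf hgv (card_conj_smul g M)).resolve_right fun hc => ?_).symm
  exact hu (hperf.ge.trans (commutator_le_of_le_centralizer_conj_smul hMu hg hc))

/- An element mapping the arc `(v, w)` to `(u, v)` sends `M` to a subgroup `M'` that is subnormal in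
`G_u^{[1]}` but not contained in `G_v^{[1]}`; all its conjugates under `G_{vu}` centralise `M`. -/
theorem exists_activeNormal_le_normalizer_of_relSubnormal (hvw : Γ.Adj v w) (hvu : Γ.Adj v u)
    (hv : RelSubnormal M (localKernel G Γ v)) (hu : RelSubnormal M (localKernel G Γ u))
    (hw : ¬ RelSubnormal M (localKernel G Γ w)) :
    ∃ B : Subgroup G, ActiveNormal Γ v u B ∧ B ≤ normalizer M := by
  obtain ⟨h, hhv, hhw⟩ := hL.exists_smul_arc_eq hvw hvu.symm
  obtain ⟨M', hM'⟩ : ∃ M', M' = MulAut.conj h • M := ⟨_, rfl⟩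
  have hM'u : RelSubnormal M' (localKernel G Γ u) := by
    simpa only [hhv, ← hM'] using hL.relSubnormal_conj_smul_localKernel h hv
  have hM'v : ¬ M' ≤ localKernel G Γ v := by
    rw [hM', ← hhw, hL.conj_smul_le_localKernel_iff]
    exact fun hMw => hw (hL.relSubnormal_localKernel_of_adj hvw hv hMw)
  have hk : ∀ k : arcStab G v u, MulAut.conj (k : G) • M' ≤ centralizer M := by
    intro k
    have hku : RelSubnormal (MulAut.conj (k : G) • M') (localKernel G Γ u) := by
      simpa only [(mem_arcStab.1 k.2).2] using hL.relSubnormal_conj_smul_localKernel (k : G) hM'u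
    refine le_centralizer_iff.1 ((hu.eq_or_le_centralizer hperf hku ?_).resolve_left fun hMk => ?_)
    · rw [card_conj_smul, hM', card_conj_smul]
    · refine hM'v ((hL.conj_smul_le_localKernel_iff (k : G)).1 ?_)
      rw [← hMk, (mem_arcStab.1 k.2).1]
      exact hv.le
  refine ⟨⨆ k : arcStab G v u, MulAut.conj (k : G) • M',
    ⟨iSup_le fun k => ?_, le_normalizer_iSup_conj_smul _ _, fun hle => hM'v ?_⟩,
    le_normalizer_of_le_centralizer (iSup_le hk)⟩
  · exact (conj_smul_mono (k : G) (hM'u.le.trans (localKernel_le_arcStab' hvu))).trans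
      (conj_smul_eq_self_of_mem k.2).le
  · simpa only [OneMemClass.coe_one, map_one, one_smul] using
      (le_iSup (fun k : arcStab G v u => MulAut.conj (k : G) • M') 1).trans hle

theorem not_relSubnormal_of_adj (hn : 4 ≤ n) (hxy : Γ.Adj x y)
    (hx : RelSubnormal M (localKernel G Γ x)) : ¬ RelSubnormal M (localKernel G Γ y) := by
  intro hy
  have hM : M ≠ ⊥ := (Subgroup.isSimpleGroup_iff.1 ‹IsSimpleGroup M›).1
  obtain ⟨v, u, w, hv, hvu, hu, hvw, hw⟩ := hL.exists_adj_not_relSubnormal hM hxy hx hy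
  refine hL.forall_adj_of_activeNormal hn
    (E := fun z => ¬ RelSubnormal M (localKernel G Γ z)) (fun z hvz => ?_) hvw hvu hw hu
  obtain ⟨B, hB, hBM⟩ : ∃ B : Subgroup G, ActiveNormal Γ v z B ∧ B ≤ normalizer M := by
    by_cases hMz : M ≤ localKernel G Γ z
    · exact hL.exists_activeNormal_le_normalizer_of_relSubnormal hperf hvw hvz hv
        (hL.relSubnormal_localKernel_of_adj hvz hv hMz) hw
    · exact hL.exists_activeNormal_le_normalizer_of_not_le hperf hvz hv hMz
  exact ⟨B, hB, fun g hg t _ ht h =>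
    ht (hL.relSubnormal_localKernel_of_smul (conj_smul_eq_of_le_normalizer hBM hg) h)⟩

end LocPair

end PerfectComponents

section PairFixing

variable {α : Type*} {p : ℕ} {a b c d : α} {D : Subgroup (Equiv.Perm α)} {σ : Equiv.Perm α}

/-- `D` is a `p`-group of permutations fixing `a` and `b`, and it is normal in the group of all
permutations fixing `a` and `b`. The action of `O_p(G_{xy})` on the neighbours of `x` gives such a
group. -/
structure IsPairFixing (p : ℕ) (a b : α) (D : Subgroup (Equiv.Perm α)) : Prop where
  isPGroup : IsPGroup p D
  apply_eq : ∀ σ ∈ D, σ a = a ∧ σ b = b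
  conj_mem : ∀ τ : Equiv.Perm α, τ a = a → τ b = b → ∀ σ ∈ D, τ * σ * τ⁻¹ ∈ D

theorem prime_eq_of_pow_apply_eq (hp : p.Prime) (hD : IsPGroup p D) (hσ : σ ∈ D) {r : ℕ}
    (hr : r.Prime) (hc : (σ ^ r) c = c) (hne : σ c ≠ c) : p = r := by
  have := Fact.mk hr
  obtain ⟨k, hk⟩ := hD ⟨σ, hσ⟩
  have hk : σ ^ p ^ k = 1 := congrArg Subtype.val hk
  have hper : Function.minimalPeriod σ c = r :=
    Function.minimalPeriod_eq_prime (by rwa [Function.IsPeriodicPt, ← Equiv.Perm.coe_pow]) hne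
  have hdvd : r ∣ p ^ k := hper ▸ Function.IsPeriodicPt.minimalPeriod_dvd (by
    rw [Function.IsPeriodicPt, ← Equiv.Perm.coe_pow, hk]; rfl)
  exact ((Nat.prime_dvd_prime_iff_eq hr hp).1 (hr.dvd_of_dvd_pow hdvd)).symm

namespace IsPairFixing

variable (h : IsPairFixing p a b D)

include h

theorem apply_ne (hσ : σ ∈ D) (hca : c ≠ a) (hcb : c ≠ b) : σ c ≠ a ∧ σ c ≠ b :=
  ⟨fun hc => hca (σ.injective (hc.trans (h.apply_eq σ hσ).1.symm)),
    fun hc => hcb (σ.injective (hc.trans (h.apply_eq σ hσ).2.symm))⟩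

theorem ne_of_apply_ne (hσ : σ ∈ D) (hd : σ d ≠ d) : d ≠ a ∧ d ≠ b :=
  ⟨fun hda => hd (hda ▸ (h.apply_eq σ hσ).1), fun hdb => hd (hdb ▸ (h.apply_eq σ hσ).2)⟩

theorem commutator_mem (hσ : σ ∈ D) {τ : Equiv.Perm α} (ha : τ a = a) (hb : τ b = b) :
    τ * σ * τ⁻¹ * σ⁻¹ ∈ D :=
  mul_mem (h.conj_mem τ ha hb σ hσ) (inv_mem hσ)

theorem swap_mul_swap_mem [DecidableEq α] (hσ : σ ∈ D) (hca : c ≠ a) (hcb : c ≠ b)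
    (hc : σ c = c) (hd : σ d ≠ d) : Equiv.swap c (σ d) * Equiv.swap c d ∈ D := by
  obtain ⟨hda, hdb⟩ := h.ne_of_apply_ne hσ hd
  have hswap := mul_mem hσ (h.conj_mem _ (Equiv.swap_apply_of_ne_of_ne hca.symm hda.symm)
    (Equiv.swap_apply_of_ne_of_ne hcb.symm hdb.symm) _ (inv_mem hσ))
  have hconj : Equiv.swap c (σ d) = σ * Equiv.swap c d * σ⁻¹ := by
    rw [← Equiv.swap_apply_apply, hc]
  rw [hconj]
  simpa only [Equiv.swap_inv, mul_assoc] using hswap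

/- If `σ` fixes `c` and maps `d ↦ e`, then its commutator with the transposition `(c d)` is a
`3`-cycle `u` on `{c, d, e}`, so `p = 3`. But either `σ` swaps `d` and `e`, or it maps `e` to a new
point `f` and `u * σ * u⁻¹ * σ⁻¹` swaps `c` and `f`, so `p = 2`. -/
theorem eq_one_of_apply_eq (hp : p.Prime) (hσ : σ ∈ D) (hca : c ≠ a) (hcb : c ≠ b)
    (hc : σ c = c) : σ = 1 := by
  classical
  by_contra hσ1
  obtain ⟨d, hd⟩ : ∃ d, σ d ≠ d := by
    by_contra! hall
    exact hσ1 (Equiv.ext hall)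
  have hdc : d ≠ c := fun hdc => hd (hdc ▸ hc)
  obtain ⟨e, he⟩ : ∃ e, σ d = e := ⟨_, rfl⟩
  have hed : e ≠ d := he ▸ hd
  have hec : e ≠ c := fun hec => hdc (σ.injective (by rw [he, hec, hc]))
  obtain ⟨u, hu⟩ : ∃ u, u = Equiv.swap c e * Equiv.swap c d := ⟨_, rfl⟩
  have huD : u ∈ D := by
    rw [hu, ← he]
    exact h.swap_mul_swap_mem hσ hca hcb hc hd
  have huc : u c = d := by simp [hu, Equiv.swap_apply_of_ne_of_ne, hdc, hed.symm]
  have hud : u d = e := by simp [hu]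
  have hue : u e = c := by simp [hu, Equiv.swap_apply_of_ne_of_ne, hec, hed]
  have hp3 : p = 3 := prime_eq_of_pow_apply_eq hp h.isPGroup huD Nat.prime_three (c := c)
    (by simp [pow_succ, huc, hud, hue]) (huc ▸ hdc)
  suffices p = 2 by omega
  by_cases hse : σ e = d
  · exact prime_eq_of_pow_apply_eq hp h.isPGroup hσ Nat.prime_two (c := d)
      (by simp [pow_succ, he, hse]) hd
  obtain ⟨f, hf⟩ : ∃ f, σ e = f := ⟨_, rfl⟩
  have hfc : f ≠ c := fun hfc => hec (σ.injective (by rw [hf, hfc, hc]))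
  have hfe : f ≠ e := fun hfe => hed (σ.injective (by rw [hf, hfe, he]))
  have huf : u f = f := by
    simp [hu, Equiv.swap_apply_of_ne_of_ne, hfc, hfe, hf ▸ hse]
  have hκc : (u * σ * u⁻¹ * σ⁻¹) c = f := by
    simp only [Equiv.Perm.mul_apply, Equiv.Perm.inv_eq_iff_eq.2 hc.symm,
      Equiv.Perm.inv_eq_iff_eq.2 hue.symm, hf, huf]
  have hκf : (u * σ * u⁻¹ * σ⁻¹) f = c := by
    simp only [Equiv.Perm.mul_apply, Equiv.Perm.inv_eq_iff_eq.2 hf.symm,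
      Equiv.Perm.inv_eq_iff_eq.2 hud.symm, he, hue]
  refine prime_eq_of_pow_apply_eq hp h.isPGroup (mul_mem (mul_mem (mul_mem huD hσ) (inv_mem huD))
    (inv_mem hσ)) Nat.prime_two (c := c) ?_ (hκc ▸ hfc)
  rw [pow_two, Equiv.Perm.mul_apply, hκc, hκf]

theorem commute_of_apply_eq (hp : p.Prime) (hσ : σ ∈ D) (hca : c ≠ a) (hcb : c ≠ b)
    {τ : Equiv.Perm α} (ha : τ a = a) (hb : τ b = b) (hc : τ c = c) (hσc : τ (σ c) = σ c) :
    Commute τ σ := by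
  obtain ⟨hna, hnb⟩ := h.apply_ne hσ hca hcb
  have h1 := h.eq_one_of_apply_eq hp (h.commutator_mem hσ ha hb) hna hnb (by
    simp only [Equiv.Perm.mul_apply, (Equiv.Perm.inv_eq_iff_eq (f := σ)).2 rfl,
      Equiv.Perm.inv_eq_iff_eq.2 hc.symm, hσc])
  exact mul_inv_eq_iff_eq_mul.1 (mul_inv_eq_one.1 h1)

end IsPairFixing

namespace IsPairFixing

variable {n : ℕ} {a b : Fin n} {D : Subgroup (Equiv.Perm (Fin n))} (h : IsPairFixing p a b D)

include h

theorem le_six (hp : p.Prime) (hD : D ≠ ⊥) : n ≤ 6 := by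
  obtain ⟨σ, hσ, hσ1⟩ := D.bot_or_exists_ne_one.resolve_left hD
  by_contra! hn
  obtain ⟨c, hc⟩ : ∃ c, σ c ≠ c := by
    by_contra! hall
    exact hσ1 (Equiv.ext hall)
  obtain ⟨hca, hcb⟩ := h.ne_of_apply_ne hσ hc
  obtain ⟨e, he⟩ := exists_fin_notMem (s := {a, b, c, σ c}) (by
    exact Finset.card_le_four.trans_lt (by omega))
  simp only [Finset.mem_insert, Finset.mem_singleton, not_or, ← ne_eq] at he
  obtain ⟨hea, heb, hec, heσ⟩ := he
  have hσe : σ e ≠ e := fun hσe => hσ1 (h.eq_one_of_apply_eq hp hσ hea heb hσe)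
  obtain ⟨f, hf⟩ := exists_fin_notMem (s := {a, b, c, σ c, e, σ e})
    (Finset.card_le_six.trans_lt hn)
  simp only [Finset.mem_insert, Finset.mem_singleton, not_or, ← ne_eq] at hf
  obtain ⟨hfa, hfb, hfc, hfσ, hfe, hfσe⟩ := hf
  have hcomm : Commute (Equiv.swap e f) σ := h.commute_of_apply_eq hp hσ hca hcb
    (Equiv.swap_apply_of_ne_of_ne hea.symm hfa.symm)
    (Equiv.swap_apply_of_ne_of_ne heb.symm hfb.symm)
    (Equiv.swap_apply_of_ne_of_ne hec.symm hfc.symm)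
    (Equiv.swap_apply_of_ne_of_ne heσ.symm hfσ.symm)
  have he := DFunLike.congr_fun hcomm.eq e
  simp only [Equiv.Perm.mul_apply, Equiv.swap_apply_left] at he
  rw [Equiv.swap_apply_of_ne_of_ne hσe hfσe.symm] at he
  exact hfe (σ.injective he.symm)

theorem prime_dvd_sub_two (hp : p.Prime) (hD : D ≠ ⊥) (hab : a ≠ b) (hn : 2 ≤ n) : p ∣ n - 2 := by
  have := Fact.mk hp
  obtain ⟨σ, hσ, hσ1⟩ := D.bot_or_exists_ne_one.resolve_left hD
  have hfix : fixedPoints D (Fin n) = {a, b} := by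
    ext c
    refine ⟨fun hc => ?_, ?_⟩
    · by_contra! hcab
      simp only [Set.mem_insert_iff, Set.mem_singleton_iff, not_or] at hcab
      exact hσ1 (h.eq_one_of_apply_eq hp hσ hcab.1 hcab.2 (hc ⟨σ, hσ⟩))
    · rintro (rfl | rfl) τ
      · exact (h.apply_eq τ τ.2).1
      · exact (h.apply_eq τ τ.2).2
  have hmod := h.isPGroup.card_modEq_card_fixedPoints (Fin n)
  rw [hfix, Nat.card_fin, Nat.card_coe_set_eq, Set.ncard_pair hab] at hmod
  exact (Nat.modEq_iff_dvd' hn).1 hmod.symm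

theorem eq_four_or_five_or_six (hp : p.Prime) (hD : D ≠ ⊥) (hab : a ≠ b) (hn : 4 ≤ n) :
    (n = 4 ∧ p = 2) ∨ (n = 5 ∧ p = 3) ∨ (n = 6 ∧ p = 2) := by
  have hn6 := h.le_six hp hD
  have hdvd := h.prime_dvd_sub_two hp hD hab (by omega)
  have hp2 := hp.two_le
  have hpn := Nat.le_of_dvd (by omega) hdvd
  interval_cases n <;> interval_cases p <;> revert hdvd hp <;> decide

end IsPairFixing

end PairFixing

section PCores

open Subgroup

variable {G V : Type*} [Group G] [MulAction G V] {Γ : SimpleGraph V} {n p : ℕ} {x y z : V}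

/-- `O_p(G_x^{[1]})`. -/
def pKernel (G : Type*) {V : Type*} [Group G] [MulAction G V] (Γ : SimpleGraph V) (p : ℕ) (x : V) :
    Subgroup G :=
  pCore p (localKernel G Γ x)

/-- `O_p(G_{xy})`. -/
def pArcStab (G : Type*) {V : Type*} [Group G] [MulAction G V] (p : ℕ) (x y : V) : Subgroup G :=
  pCore p (arcStab G x y)

/-- `G_{xy}^{[2]}`. For an edge `{x, y}` of a connected graph, fixing the balls of radius two around
`x` and `y` amounts to lying in `G_z^{[1]}` for every neighbour `z` of `x` or `y`. -/
def edgeKernel (G : Type*) {V : Type*} [Group G] [MulAction G V] (Γ : SimpleGraph V) (x y : V) :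
    Subgroup G :=
  ⨅ (z : V) (_ : Γ.Adj x z ∨ Γ.Adj y z), localKernel G Γ z

/-- The group of permutations of `Fin n` induced by `B` through the labelling `ℓ`. -/
def labelImage {n : ℕ} (ℓ : Fin n → Fin n → V) (B : Subgroup G) :
    Subgroup (Equiv.Perm (Fin n)) where
  carrier := {σ | ∃ g ∈ B, ActsAs ℓ g σ}
  one_mem' := ⟨1, B.one_mem, .one ℓ⟩
  mul_mem' := fun ⟨g, hg, hσ⟩ ⟨k, hk, hτ⟩ => ⟨g * k, B.mul_mem hg hk, hσ.mul hτ⟩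
  inv_mem' := fun ⟨g, hg, hσ⟩ => ⟨g⁻¹, B.inv_mem hg, hσ.inv⟩

/-- A locally `L` pair in which `O_p(G_{xy}^{[2]})` is nontrivial for the edges `{x, y}`: the
hypothetical configuration that remains once the components have been excluded. -/
structure PLocPair (G : Type*) {V : Type*} [Group G] [MulAction G V] (Γ : SimpleGraph V)
    (n p : ℕ) : Prop extends LocPair G Γ n where
  four_le : 4 ≤ n
  prime : p.Prime
  pCore_edgeKernel_ne_bot : ∀ x y, Γ.Adj x y → pCore p (edgeKernel G Γ x y) ≠ ⊥

theorem pKernel_le (x : V) : pKernel G Γ p x ≤ localKernel G Γ x := pCore_le p _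

theorem pKernel_le_arcStab (h : Γ.Adj x y) : pKernel G Γ p x ≤ arcStab G x y :=
  (pKernel_le x).trans (localKernel_le_arcStab h)

theorem pArcStab_le (x y : V) : pArcStab G p x y ≤ arcStab G x y := pCore_le p _

theorem pArcStab_comm (x y : V) : pArcStab G p x y = pArcStab G p y x := by
  rw [pArcStab, arcStab_comm, pArcStab]

theorem arcStab_le_normalizer_pArcStab (x y : V) :
    arcStab G x y ≤ normalizer (pArcStab G p x y) :=
  le_normalizer_pCore p _

theorem conj_smul_pArcStab (g : G) (x y : V) :
    MulAut.conj g • pArcStab G p x y = pArcStab G p (g • x) (g • y) := by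
  rw [pArcStab, conj_smul_pCore, conj_smul_arcStab, pArcStab]

theorem edgeKernel_le (h : Γ.Adj x z ∨ Γ.Adj y z) : edgeKernel G Γ x y ≤ localKernel G Γ z :=
  iInf₂_le z h

theorem edgeKernel_comm (x y : V) : edgeKernel G Γ x y = edgeKernel G Γ y x := by
  simp only [edgeKernel, or_comm]

namespace LocPair

variable (hL : LocPair G Γ n)

include hL

theorem eq_bot_of_equivariant {F : V → V → Subgroup G} (hxy : Γ.Adj x y)
    (hF : ∀ (g : G) u v, MulAut.conj g • F u v = F (g • u) (g • v)) (hsymm : F x y = F y x)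
    (hle : F x y ≤ arcStab G x y) (hx : stabilizer G x ≤ normalizer (F x y)) : F x y = ⊥ := by
  obtain ⟨t, ht, ht'⟩ := hL.exists_smul_arc_eq hxy hxy.symm
  refine hL.eq_bot_of_le_normalizer hxy hle hx ?_
  simpa only [conj_smul_stabilizer, hF, ht, ht', ← hsymm] using conj_smul_le_normalizer hx t

theorem conj_smul_pKernel (g : G) (x : V) :
    MulAut.conj g • pKernel G Γ p x = pKernel G Γ p (g • x) := by
  rw [pKernel, conj_smul_pCore, hL.conj_smul_localKernel, pKernel]

theorem stabilizer_le_normalizer_pKernel (x : V) :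
    stabilizer G x ≤ normalizer (pKernel G Γ p x) :=
  stabilizer_le_normalizer_of_equivariant hL.conj_smul_pKernel x

theorem conj_smul_edgeKernel (g : G) (x y : V) :
    MulAut.conj g • edgeKernel G Γ x y = edgeKernel G Γ (g • x) (g • y) := by
  have key : ∀ (g : G) (x y : V),
      MulAut.conj g • edgeKernel G Γ x y ≤ edgeKernel G Γ (g • x) (g • y) := by
    refine fun g x y => le_iInf₂ fun z hz => ?_
    rw [← hL.adj_inv_smul_iff, ← hL.adj_inv_smul_iff] at hz
    simpa only [hL.conj_smul_localKernel, smul_inv_smul] using conj_smul_mono g (edgeKernel_le hz)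
  refine le_antisymm (key g x y) ?_
  simpa only [conj_smul_inv_smul, inv_smul_smul] using
    conj_smul_mono g (key g⁻¹ (g • x) (g • y))

theorem relSubnormal_edgeKernel (hxy : Γ.Adj x y) (hxz : Γ.Adj x z) :
    RelSubnormal (edgeKernel G Γ x y) (localKernel G Γ z) := by
  refine hL.relSubnormal_localKernel_of_adj hxz ?_ (edgeKernel_le (.inl hxz))
  exact .of_le_normalizer (edgeKernel_le (.inr hxy.symm)) ((localKernel_le_arcStab hxy).trans
    (arcStab_le_normalizer_of_equivariant hL.conj_smul_edgeKernel x y))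

variable [Finite G]

theorem pKernel_le_pArcStab (hxy : Γ.Adj x y) : pKernel G Γ p x ≤ pArcStab G p x y :=
  (RelSubnormal.of_le_normalizer (localKernel_le_arcStab hxy)
    (inf_le_left.trans (hL.stabilizer_le_normalizer_localKernel x))).pCore_le_pCore p

theorem pKernel_le_pArcStab' (hxy : Γ.Adj x y) : pKernel G Γ p y ≤ pArcStab G p x y :=
  (hL.pKernel_le_pArcStab hxy.symm).trans (pArcStab_comm y x).le

theorem pCore_edgeKernel_le (hxy : Γ.Adj x y) (hz : Γ.Adj x z ∨ Γ.Adj y z) :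
    pCore p (edgeKernel G Γ x y) ≤ pKernel G Γ p z := by
  obtain hz | hz := hz
  · exact (hL.relSubnormal_edgeKernel hxy hz).pCore_le_pCore p
  · rw [edgeKernel_comm]
    exact (hL.relSubnormal_edgeKernel hxy.symm hz).pCore_le_pCore p

end LocPair

namespace IsPairLabelling

variable {ℓ : Fin n → Fin n → V} (hl : IsPairLabelling G Γ x ℓ) {a b c : Fin n} {g : G}

include hl

theorem exists_smul_eq_of_mem_arcStab (hab : a ≠ b) (hg : g ∈ arcStab G x (ℓ a b)) (hca : c ≠ a)
    (hcb : c ≠ b) : ∃ d, d ≠ a ∧ d ≠ b ∧ g • ℓ a c = ℓ a d := by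
  obtain ⟨σ, hσ⟩ := hl.exists_perm g hg.1
  obtain ⟨ha, hb⟩ := hl.apply_eq_of_smul_eq hσ hab hg.2
  exact ⟨σ c, fun hc => hca (σ.injective (hc.trans ha.symm)),
    fun hc => hcb (σ.injective (hc.trans hb.symm)), by rw [hσ a c hca.symm, ha]⟩

theorem orbit_subset_image (hab : a ≠ b) {K : Subgroup G} (hK : K ≤ arcStab G x (ℓ a b))
    (hca : c ≠ a) (hcb : c ≠ b) : orbit K (ℓ a c) ⊆ ℓ a '' {a, b}ᶜ := by
  rintro _ ⟨k, rfl⟩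
  obtain ⟨d, hda, hdb, hd⟩ := hl.exists_smul_eq_of_mem_arcStab hab (hK k.2) hca hcb
  exact ⟨d, by simp [hda, hdb], hd.symm⟩

theorem ncard_image_compl_pair (hab : a ≠ b) : (ℓ a '' {a, b}ᶜ).ncard = n - 2 := by
  rw [Set.InjOn.ncard_image, Set.ncard_compl, Set.ncard_pair hab, Nat.card_fin]
  intro c hc c' hc' he
  simp only [Set.mem_compl_iff, Set.mem_insert_iff, Set.mem_singleton_iff, not_or] at hc hc'
  exact (hl.inj _ _ _ _ (Ne.symm hc.1) (Ne.symm hc'.1) he).2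

theorem isPairFixing_labelImage (hn : 2 ≤ n) (hab : a ≠ b) {B : Subgroup G}
    (hB : B ≤ arcStab G x (ℓ a b)) (hN : arcStab G x (ℓ a b) ≤ normalizer B) (hBp : IsPGroup p B) :
    IsPairFixing p a b (labelImage ℓ B) where
  isPGroup := by
    rintro ⟨σ, g, hg, hσ⟩
    obtain ⟨k, hk⟩ := hBp ⟨g, hg⟩
    have hpow := hσ.pow (p ^ k)
    rw [show g ^ p ^ k = 1 from congrArg Subtype.val hk] at hpow
    exact ⟨k, Subtype.ext (hl.actsAs_unique hn hpow (.one ℓ))⟩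
  apply_eq σ := fun ⟨g, hg, hσ⟩ => hl.apply_eq_of_smul_eq hσ hab (hB hg).2
  conj_mem τ ha hb σ := by
    rintro ⟨g, hg, hσ⟩
    obtain ⟨k, hk, hτ⟩ := hl.exists_actsAs τ
    refine ⟨k * g * k⁻¹, conj_mem_of_le_normalizer hN ⟨hk, ?_⟩ hg, hσ.conj hτ⟩
    exact (hτ a b hab).trans (by rw [ha, hb])

end IsPairLabelling

variable [Finite G]

theorem pArcStab_inf_localKernel_le (h : Γ.Adj x y) :
    pArcStab G p x y ⊓ localKernel G Γ x ≤ pKernel G Γ p x :=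
  pCore_inf_le p (localKernel_le_arcStab h)

namespace PLocPair

variable (h : PLocPair G Γ n p)

include h

theorem not_pArcStab_le (hxy : Γ.Adj x y) : ¬ pArcStab G p x y ≤ localKernel G Γ x := by
  intro hle
  have heq : pArcStab G p x y = pKernel G Γ p x := le_antisymm
    ((le_inf le_rfl hle).trans (pArcStab_inf_localKernel_le hxy)) (h.pKernel_le_pArcStab hxy)
  refine h.pCore_edgeKernel_ne_bot x y hxy (eq_bot_mono ?_ (h.eq_bot_of_equivariant hxy
    conj_smul_pArcStab (pArcStab_comm x y) (pArcStab_le x y)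
    (heq ▸ h.stabilizer_le_normalizer_pKernel x)))
  exact (h.pCore_edgeKernel_le hxy (.inr hxy.symm)).trans heq.ge

theorem activeNormal_pArcStab (hxy : Γ.Adj x y) : ActiveNormal Γ x y (pArcStab G p x y) :=
  ⟨pArcStab_le x y, arcStab_le_normalizer_pArcStab x y, h.not_pArcStab_le hxy⟩

theorem pArcStab_ne_bot (hxy : Γ.Adj x y) : pArcStab G p x y ≠ ⊥ :=
  fun hbot => h.not_pArcStab_le hxy (hbot ▸ bot_le)

theorem eq_four_or_five_or_six : (n = 4 ∧ p = 2) ∨ (n = 5 ∧ p = 3) ∨ (n = 6 ∧ p = 2) := by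
  have hn := h.four_le
  obtain ⟨x⟩ := h.connected.nonempty
  obtain ⟨ℓ, hl⟩ := h.exists_labelling x
  obtain ⟨y, hxy⟩ := h.exists_adj (by omega) x
  obtain ⟨a, b, hab, rfl⟩ := hl.surj y hxy
  refine (hl.isPairFixing_labelImage (by omega) hab (pArcStab_le x _)
    (arcStab_le_normalizer_pArcStab x _) (isPGroup_pCore p _)).eq_four_or_five_or_six h.prime
    (fun hbot => h.not_pArcStab_le hxy fun g hg => ?_) hab hn
  obtain ⟨σ, hσ⟩ := hl.exists_perm g (pArcStab_le _ _ hg).1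
  obtain rfl : σ = 1 := (eq_bot_iff_forall _).1 hbot σ ⟨g, hg, hσ⟩
  exact hl.mem_localKernel_iff.2 ⟨(pArcStab_le _ _ hg).1, hσ⟩

section Labelled

variable {ℓ : Fin n → Fin n → V} (hl : IsPairLabelling G Γ x ℓ) {a b c c' : Fin n} {g : G}
  {K : Subgroup G}

include hl

theorem mem_localKernel_of_smul_eq (hab : a ≠ b) (hg : g ∈ pArcStab G p x (ℓ a b)) (hca : c ≠ a)
    (hcb : c ≠ b) (hc : g • ℓ a c = ℓ a c) : g ∈ localKernel G Γ x := by
  have hn := h.four_le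
  obtain ⟨σ, hσ⟩ := hl.exists_perm g (pArcStab_le _ _ hg).1
  obtain rfl : σ = 1 := (hl.isPairFixing_labelImage (by omega) hab (pArcStab_le x _)
    (arcStab_le_normalizer_pArcStab x _) (isPGroup_pCore p _)).eq_one_of_apply_eq h.prime
    ⟨g, hg, hσ⟩ hca hcb (hl.apply_eq_of_smul_eq hσ hca.symm hc).2
  exact hl.mem_localKernel_iff.2 ⟨(pArcStab_le _ _ hg).1, hσ⟩

theorem pArcStab_le_sup_of_transitive (hab : a ≠ b) (hK : K ≤ pArcStab G p x (ℓ a b)) (hca : c ≠ a)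
    (hcb : c ≠ b) (htrans : ∀ d, d ≠ a → d ≠ b → ∃ k ∈ K, k • ℓ a c = ℓ a d) :
    pArcStab G p x (ℓ a b) ≤ K ⊔ pKernel G Γ p x := by
  intro g hg
  obtain ⟨d, hda, hdb, hd⟩ := hl.exists_smul_eq_of_mem_arcStab hab (pArcStab_le _ _ hg) hca hcb
  obtain ⟨k, hk, hkd⟩ := htrans d hda hdb
  have hkg : k⁻¹ * g ∈ pArcStab G p x (ℓ a b) := mul_mem (inv_mem (hK hk)) hg
  have hkg' : k⁻¹ * g ∈ localKernel G Γ x := h.mem_localKernel_of_smul_eq hl hab hkg hca hcb (by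
    rw [mul_smul, hd, ← hkd, inv_smul_smul])
  rw [← mul_inv_cancel_left k g]
  exact mul_mem_sup hk (pArcStab_inf_localKernel_le (hl.adj a b hab) ⟨hkg, hkg'⟩)

theorem relIndex_localKernel_eq_ncard_orbit (hab : a ≠ b) (hK : K ≤ pArcStab G p x (ℓ a b))
    (hca : c ≠ a) (hcb : c ≠ b) : (localKernel G Γ x).relIndex K = (orbit K (ℓ a c)).ncard := by
  rw [← index_stabilizer, relIndex]
  congr 1
  ext k
  rw [mem_subgroupOf, mem_stabilizer_iff]
  exact ⟨fun hk => (mem_localKernel.1 hk).2 _ (hl.adj a c hca.symm),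
    h.mem_localKernel_of_smul_eq hl hab (hK k.2) hca hcb⟩

theorem exists_mem_smul_eq_of_relIndex_eq (hab : a ≠ b) (hK : K ≤ pArcStab G p x (ℓ a b))
    (hi : (localKernel G Γ x).relIndex K = n - 2) (hca : c ≠ a) (hcb : c ≠ b) (hca' : c' ≠ a)
    (hcb' : c' ≠ b) : ∃ k ∈ K, k • ℓ a c = ℓ a c' := by
  have horb : orbit K (ℓ a c) = ℓ a '' {a, b}ᶜ :=
    Set.eq_of_subset_of_ncard_le
      (hl.orbit_subset_image hab (hK.trans (pArcStab_le _ _)) hca hcb) (by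
        rw [hl.ncard_image_compl_pair hab, ← hi,
          h.relIndex_localKernel_eq_ncard_orbit hl hab hK hca hcb])
  obtain ⟨k, hk⟩ : ℓ a c' ∈ orbit K (ℓ a c) := horb ▸ ⟨c', by simp [hca', hcb'], rfl⟩
  exact ⟨k, k.2, hk⟩

end Labelled

theorem relIndex_localKernel_le (hxy : Γ.Adj x y) {K : Subgroup G} (hK : K ≤ pArcStab G p x y) :
    (localKernel G Γ x).relIndex K ≤ n - 2 := by
  obtain ⟨ℓ, hl⟩ := h.exists_labelling x
  obtain ⟨a, b, hab, rfl⟩ := hl.surj y hxy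
  obtain ⟨c, hca, hcb⟩ := exists_fin_ne_ne (Nat.le_of_succ_le h.four_le) a b
  rw [h.relIndex_localKernel_eq_ncard_orbit hl hab hK hca hcb, ← hl.ncard_image_compl_pair hab]
  exact Set.ncard_le_ncard (hl.orbit_subset_image hab (hK.trans (pArcStab_le _ _)) hca hcb)

theorem pArcStab_le_sup_of_activeNormal (hxy : Γ.Adj x y) {K : Subgroup G}
    (hK : K ≤ pArcStab G p x y) (hA : ActiveNormal Γ x y K) :
    pArcStab G p x y ≤ K ⊔ pKernel G Γ p x := by
  obtain ⟨ℓ, hl⟩ := h.exists_labelling x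
  obtain ⟨a, b, hab, rfl⟩ := hl.surj y hxy
  obtain ⟨c, hca, hcb⟩ := exists_fin_ne_ne (Nat.le_of_succ_le h.four_le) a b
  refine h.pArcStab_le_sup_of_transitive hl hab hK hca hcb fun d hda hdb => ?_
  obtain rfl | hcd := eq_or_ne c d
  · exact ⟨1, K.one_mem, one_smul G _⟩
  obtain ⟨g, hg, σ, hσ, ha, -, hc⟩ := hl.exists_mem_apply_eq hab hca hcb hda hdb hcd hA
  exact ⟨g, hg, by rw [hσ a c hca.symm, ha, hc]⟩

end PLocPair

end PCores

section VertexModules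

open Subgroup

variable {G V : Type*} [Group G] [MulAction G V] {Γ : SimpleGraph V} {n p : ℕ} {x y z : V} {g : G}

/-- `Ω₁(Z(T))` for a `p`-group `T`: the elements of order dividing `p` in the centre of `T`. -/
def omegaCenter (p : ℕ) (T : Subgroup G) : Subgroup G where
  carrier := {z | z ∈ T ∧ z ∈ centralizer T ∧ z ^ p = 1}
  one_mem' := ⟨T.one_mem, one_mem _, one_pow p⟩
  mul_mem' := fun ⟨ha, ha', hap⟩ ⟨hb, hb', hbp⟩ =>
    ⟨mul_mem ha hb, (centralizer (T : Set G)).mul_mem ha' hb', by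
      rw [(show Commute _ _ from hb' _ ha).mul_pow, hap, hbp, one_mul]⟩
  inv_mem' := fun ⟨ha, ha', hap⟩ =>
    ⟨inv_mem ha, (centralizer (T : Set G)).inv_mem ha', by rw [inv_pow, hap, inv_one]⟩

/-- `Z_{xy} = Ω₁(Z(O_p(G_{xy})))`. -/
def edgeModule (G : Type*) {V : Type*} [Group G] [MulAction G V] (p : ℕ) (x y : V) :
    Subgroup G :=
  omegaCenter p (pArcStab G p x y)

/-- `V_x`, the subgroup generated by the groups `Z_{xz}` for the neighbours `z` of `x`. -/
def vertexModule (G : Type*) {V : Type*} [Group G] [MulAction G V] (Γ : SimpleGraph V) (p : ℕ)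
    (x : V) : Subgroup G :=
  ⨆ z : Γ.neighborSet x, edgeModule G p x z

theorem omegaCenter_le (p : ℕ) (T : Subgroup G) : omegaCenter p T ≤ T := fun _ hz => hz.1

theorem le_centralizer_omegaCenter (p : ℕ) (T : Subgroup G) :
    T ≤ centralizer (omegaCenter p T) :=
  le_centralizer_iff.1 fun _ hz => hz.2.1

theorem conj_smul_omegaCenter (g : G) (T : Subgroup G) :
    MulAut.conj g • omegaCenter p T = omegaCenter p (MulAut.conj g • T) := by
  have key : ∀ (g : G) (T : Subgroup G),
      MulAut.conj g • omegaCenter p T ≤ omegaCenter p (MulAut.conj g • T) := by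
    intro g T
    refine fun z hz => ⟨conj_smul_mono g (omegaCenter_le p T) hz, conj_smul_le_centralizer
      (le_centralizer_iff.1 (le_centralizer_omegaCenter p T)) g hz, ?_⟩
    have hpow := (mem_conj_smul.1 hz).2.2
    rwa [← inv_inv g, inv_inv g⁻¹, conj_pow, conj_eq_one_iff] at hpow
  refine le_antisymm (key g T) ?_
  simpa only [conj_smul_inv_smul, conj_inv_smul_smul] using
    conj_smul_mono g (key g⁻¹ (MulAut.conj g • T))

theorem omegaCenter_ne_bot [Finite G] (hp : p.Prime) {T : Subgroup G} (hT : IsPGroup p T)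
    (hne : T ≠ ⊥) : omegaCenter p T ≠ ⊥ := by
  have := Fact.mk hp
  have := (nontrivial_iff_ne_bot T).2 hne
  have := hT.center_nontrivial
  obtain ⟨g, hg⟩ := exists_prime_orderOf_dvd_card' (G := center T) p
    ((IsPGroup.card_eq_or_dvd (hT.to_subgroup _)).resolve_left Finite.one_lt_card.ne')
  intro hbot
  have hmem : ((g : T) : G) ∈ omegaCenter p T := by
    refine ⟨(g : T).2, fun t ht => congrArg Subtype.val (mem_center_iff.1 g.2 ⟨t, ht⟩), ?_⟩
    exact_mod_cast congrArg (fun y : center T => ((y : T) : G)) (hg ▸ pow_orderOf_eq_one g)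
  rw [hbot, mem_bot] at hmem
  obtain rfl : g = 1 := Subtype.ext (Subtype.ext hmem)
  exact hp.one_lt.ne (orderOf_one.symm.trans hg)

theorem edgeModule_comm (x y : V) : edgeModule G p x y = edgeModule G p y x := by
  rw [edgeModule, pArcStab_comm, edgeModule]

theorem conj_smul_edgeModule (g : G) (x y : V) :
    MulAut.conj g • edgeModule G p x y = edgeModule G p (g • x) (g • y) := by
  rw [edgeModule, conj_smul_omegaCenter, conj_smul_pArcStab, edgeModule]

theorem arcStab_le_normalizer_edgeModule (x y : V) :
    arcStab G x y ≤ normalizer (edgeModule G p x y) :=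
  arcStab_le_normalizer_of_equivariant conj_smul_edgeModule x y

theorem edgeModule_le_pArcStab (x y : V) : edgeModule G p x y ≤ pArcStab G p x y :=
  omegaCenter_le p _

theorem edgeModule_le_arcStab (x y : V) : edgeModule G p x y ≤ arcStab G x y :=
  (edgeModule_le_pArcStab x y).trans (pArcStab_le x y)

theorem pArcStab_le_centralizer_edgeModule (x y : V) :
    pArcStab G p x y ≤ centralizer (edgeModule G p x y) :=
  le_centralizer_omegaCenter p _

theorem edgeModule_le_vertexModule (hxy : Γ.Adj x y) :
    edgeModule G p x y ≤ vertexModule G Γ p x :=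
  le_iSup (fun z : Γ.neighborSet x => edgeModule G p x z) ⟨y, hxy⟩

namespace LocPair

variable (hL : LocPair G Γ n)

include hL

theorem conj_smul_vertexModule (g : G) (x : V) :
    MulAut.conj g • vertexModule G Γ p x = vertexModule G Γ p (g • x) := by
  have key : ∀ (g : G) (x : V),
      MulAut.conj g • vertexModule G Γ p x ≤ vertexModule G Γ p (g • x) := by
    intro g x
    rw [vertexModule, conj_smul_iSup]
    refine iSup_le fun z => ?_
    rw [conj_smul_edgeModule]
    exact edgeModule_le_vertexModule (hL.adj g _ _ z.2)
  refine le_antisymm (key g x) ?_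
  simpa only [conj_smul_inv_smul, inv_smul_smul] using conj_smul_mono g (key g⁻¹ (g • x))

theorem stabilizer_le_normalizer_vertexModule (x : V) :
    stabilizer G x ≤ normalizer (vertexModule G Γ p x) :=
  stabilizer_le_normalizer_of_equivariant hL.conj_smul_vertexModule x

end LocPair

namespace PLocPair

variable [Finite G] (h : PLocPair G Γ n p)

include h

theorem edgeModule_ne_bot (hxy : Γ.Adj x y) : edgeModule G p x y ≠ ⊥ :=
  omegaCenter_ne_bot h.prime (isPGroup_pCore p _) (h.pArcStab_ne_bot hxy)

theorem commutator_pArcStab_eq_of_not_le (hxy : Γ.Adj x y)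
    (hZ : ¬ edgeModule G p x y ≤ localKernel G Γ x) :
    ⁅pArcStab G p x y, pArcStab G p x y⁆ = ⁅pKernel G Γ p x, pKernel G Γ p x⁆ := by
  refine commutator_self_eq_of_le_sup ?_ (h.pKernel_le_pArcStab hxy)
    (pArcStab_le_centralizer_edgeModule x y)
  rw [sup_comm]
  exact h.pArcStab_le_sup_of_activeNormal hxy (edgeModule_le_pArcStab x y)
    ⟨edgeModule_le_arcStab x y, arcStab_le_normalizer_edgeModule x y, hZ⟩

/-- If every `O_p(G_{xy})` were abelian, then `O_p(G_x^{[1]}) ∩ O_p(G_y^{[1]})` would be centralised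
by the `O_p(G_{xu})` and the `O_p(G_{yu})`, hence trivial. -/
theorem exists_pArcStab_not_le_centralizer :
    ∃ x y, Γ.Adj x y ∧ ¬ pArcStab G p x y ≤ centralizer (pArcStab G p x y) := by
  by_contra! hcomm
  have hn := h.four_le
  obtain ⟨x⟩ := h.connected.nonempty
  obtain ⟨y, hxy⟩ := h.exists_adj (by omega) x
  have hinf : pKernel G Γ p x ⊓ pKernel G Γ p y = ⊥ := by
    refine h.eq_bot_of_activeNormal hn hxy (inf_le_left.trans (pKernel_le_arcStab hxy))
      (le_normalizer_inf (inf_le_left.trans (h.stabilizer_le_normalizer_pKernel x))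
        (inf_le_right.trans (h.stabilizer_le_normalizer_pKernel y)))
      (fun u hu => ⟨_, h.activeNormal_pArcStab hu, ?_⟩)
      (fun u hu => ⟨_, h.activeNormal_pArcStab hu, ?_⟩)
    · exact le_normalizer_of_le_centralizer ((hcomm x u hu).trans
        (centralizer_le (inf_le_left.trans (h.pKernel_le_pArcStab hu))))
    · exact le_normalizer_of_le_centralizer ((hcomm y u hu).trans
        (centralizer_le (inf_le_right.trans (h.pKernel_le_pArcStab hu))))
  exact h.pCore_edgeKernel_ne_bot x y hxy (eq_bot_mono
    (le_inf (h.pCore_edgeKernel_le hxy (.inr hxy.symm)) (h.pCore_edgeKernel_le hxy (.inl hxy)))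
    hinf)

theorem edgeModule_le_localKernel (hxy : Γ.Adj x y) :
    edgeModule G p x y ≤ localKernel G Γ x := by
  by_contra hcon
  have key : ∀ u v, Γ.Adj u v →
      ⁅pArcStab G p u v, pArcStab G p u v⁆ = ⁅pKernel G Γ p u, pKernel G Γ p u⁆ := by
    intro u v huv
    obtain ⟨g, rfl, rfl⟩ := h.exists_smul_arc_eq hxy huv
    rw [← conj_smul_pArcStab, ← conj_smul_commutator, h.commutator_pArcStab_eq_of_not_le hxy hcon,
      conj_smul_commutator, h.conj_smul_pKernel]
  obtain ⟨u, v, huv, hne⟩ := h.exists_pArcStab_not_le_centralizer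
  refine hne (commutator_eq_bot_iff_le_centralizer.1 (h.eq_bot_of_equivariant
    (F := fun u v => ⁅pArcStab G p u v, pArcStab G p u v⁆) huv (fun _ _ _ => ?_) ?_ ?_ ?_))
  · rw [conj_smul_commutator, conj_smul_pArcStab]
  · rw [pArcStab_comm]
  · exact (commutator_le_self _).trans (pArcStab_le u v)
  · rw [key u v huv]
    exact le_normalizer_commutator (h.stabilizer_le_normalizer_pKernel u)
      (h.stabilizer_le_normalizer_pKernel u)

theorem vertexModule_le_pKernel (x : V) : vertexModule G Γ p x ≤ pKernel G Γ p x :=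
  iSup_le fun z => (le_inf (edgeModule_le_pArcStab x z) (h.edgeModule_le_localKernel z.2)).trans
    (pArcStab_inf_localKernel_le z.2)

theorem vertexModule_le_localKernel (x : V) : vertexModule G Γ p x ≤ localKernel G Γ x :=
  (h.vertexModule_le_pKernel x).trans (pKernel_le x)

theorem pKernel_le_centralizer_vertexModule (x : V) :
    pKernel G Γ p x ≤ centralizer (vertexModule G Γ p x) :=
  le_centralizer_iff.1 (iSup_le fun z => le_centralizer_iff.1
    ((h.pKernel_le_pArcStab z.2).trans (pArcStab_le_centralizer_edgeModule x z)))

theorem vertexModule_le_centralizer_self (x : V) :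
    vertexModule G Γ p x ≤ centralizer (vertexModule G Γ p x) :=
  (h.vertexModule_le_pKernel x).trans (h.pKernel_le_centralizer_vertexModule x)

theorem vertexModule_le_omegaCenter (x : V) :
    vertexModule G Γ p x ≤ omegaCenter p (vertexModule G Γ p x) :=
  iSup_le fun z _ hg =>
    have hgV := edgeModule_le_vertexModule z.2 hg
    ⟨hgV, h.vertexModule_le_centralizer_self x hgV, hg.2.2⟩

theorem vertexModule_ne_bot (x : V) : vertexModule G Γ p x ≠ ⊥ := by
  obtain ⟨y, hy⟩ := h.exists_adj (by linarith [h.four_le]) x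
  exact ne_bot_of_le_ne_bot (h.edgeModule_ne_bot hy) (edgeModule_le_vertexModule hy)

theorem mem_localKernel_of_mem_centralizer (hxy : Γ.Adj x y) (hg : g ∈ arcStab G x y)
    (hgV : g ∈ centralizer (vertexModule G Γ p x)) : g ∈ localKernel G Γ x := by
  by_contra hcon
  set C := centralizer (vertexModule G Γ p x : Set G)
  have hC : stabilizer G x ≤ normalizer C :=
    le_normalizer_centralizer (h.stabilizer_le_normalizer_vertexModule x)
  have hZ : stabilizer G x ≤ normalizer (edgeModule G p x y) := by
    refine h.stabilizer_le_of_activeNormal h.four_le hxy (arcStab_le_normalizer_edgeModule x y)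
      fun u hu => ⟨C ⊓ arcStab G x u, ⟨inf_le_right, le_normalizer_inf (inf_le_left.trans hC)
        le_normalizer, fun hle => ?_⟩, ?_⟩
    · obtain ⟨k, hk, rfl⟩ := h.exists_smul_eq_of_adj hxy hu
      have hkg : k * g * k⁻¹ ∈ localKernel G Γ x := by
        have hk' := conj_mem_conj_smul (g := k) hg
        rw [conj_smul_arcStab, hk] at hk'
        exact hle ⟨conj_mem_of_le_normalizer hC hk hgV, hk'⟩
      rw [← hk, ← h.conj_smul_localKernel, mem_conj_smul] at hkg
      exact hcon (by simpa only [mul_assoc, inv_mul_cancel_left, inv_mul_cancel, mul_one] using hkg)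
    · exact le_normalizer_of_le_centralizer
        (inf_le_left.trans (centralizer_le (edgeModule_le_vertexModule hxy)))
  exact h.edgeModule_ne_bot hxy (h.eq_bot_of_equivariant hxy conj_smul_edgeModule
    (edgeModule_comm x y) (edgeModule_le_arcStab x y) hZ)

end PLocPair

end VertexModules

section CriticalDistance

open Subgroup

variable {G V : Type*} [Group G] [MulAction G V] {Γ : SimpleGraph V} {n p b : ℕ} {u v w x y : V}

theorem exists_adj_dist_eq_add_one (hc : Γ.Connected) (hne : u ≠ v) :
    ∃ w, Γ.Adj v w ∧ Γ.dist u v = Γ.dist u w + 1 := by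
  obtain ⟨W, hW⟩ := hc.exists_walk_length_eq_dist v u
  cases W with
  | nil => exact absurd rfl hne
  | @cons _ w _ hvw W =>
    refine ⟨w, hvw, ?_⟩
    rw [SimpleGraph.Walk.length_cons, SimpleGraph.dist_comm] at hW
    have hwu : Γ.dist w u ≤ W.length := SimpleGraph.dist_le W
    have := hvw.diff_dist_adj (u := u)
    rw [SimpleGraph.dist_comm] at hwu
    omega

/-- `b` is the least distance between two vertices `u`, `v` such that `V_u` acts nontrivially on the
neighbours of `v`. -/
structure IsCriticalDist (G : Type*) {V : Type*} [Group G] [MulAction G V] (Γ : SimpleGraph V)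
    (n p b : ℕ) : Prop extends PLocPair G Γ n p where
  le_localKernel_of_dist_lt : ∀ u v, Γ.dist u v < b → vertexModule G Γ p u ≤ localKernel G Γ v
  exists_not_le : ∃ u v, Γ.dist u v = b ∧ ¬ vertexModule G Γ p u ≤ localKernel G Γ v

namespace PLocPair

variable [Finite G] (h : PLocPair G Γ n p)

include h

theorem exists_isCriticalDist : ∃ b, IsCriticalDist G Γ n p b := by
  classical
  have hex : ∃ b, ∃ u v, Γ.dist u v = b ∧ ¬ vertexModule G Γ p u ≤ localKernel G Γ v := by
    by_contra! hcon
    obtain ⟨x⟩ := h.connected.nonempty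
    exact h.vertexModule_ne_bot x ((eq_bot_iff_forall _).2 fun g hg =>
      h.faithful g fun v => (hcon _ x v rfl hg).1)
  refine ⟨Nat.find hex, h, fun u v huv => ?_, Nat.find_spec hex⟩
  by_contra hcon
  exact Nat.find_min hex huv ⟨u, v, rfl, hcon⟩

theorem le_centralizer_vertexModule_iff (hvw : Γ.Adj v w) {K : Subgroup G}
    (hK : K ≤ pArcStab G p v w) :
    K ≤ centralizer (vertexModule G Γ p v) ↔ K ≤ localKernel G Γ v :=
  ⟨fun hc _ hg => h.mem_localKernel_of_mem_centralizer hvw (pArcStab_le _ _ (hK hg)) (hc hg),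
    fun hle => ((le_inf hK hle).trans (pArcStab_inf_localKernel_le hvw)).trans
      (h.pKernel_le_centralizer_vertexModule v)⟩

end PLocPair

namespace IsCriticalDist

section DistOne

variable (h : IsCriticalDist G Γ n p 1)

include h

theorem not_vertexModule_le_localKernel_of_adj (hxy : Γ.Adj x y) :
    ¬ vertexModule G Γ p x ≤ localKernel G Γ y := by
  obtain ⟨u, v, huv, hne⟩ := h.exists_not_le
  obtain ⟨g, rfl, rfl⟩ := h.exists_smul_arc_eq (SimpleGraph.dist_eq_one_iff_adj.1 huv) hxy
  rwa [← h.conj_smul_vertexModule, ← h.conj_smul_localKernel, pointwise_smul_le_pointwise_smul_iff]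

variable [Finite G]

theorem activeNormal_pKernel_of_adj (hxy : Γ.Adj x y) :
    ActiveNormal Γ x y (pKernel G Γ p y) :=
  ⟨(h.pKernel_le_pArcStab' hxy).trans (pArcStab_le x y),
    inf_le_right.trans (h.stabilizer_le_normalizer_pKernel y), fun hle =>
      h.not_vertexModule_le_localKernel_of_adj hxy.symm ((h.vertexModule_le_pKernel y).trans hle)⟩

/-- Since `O_p(G_{xy}) = V_x O_p(G_y^{[1]})`, Dedekind's law gives
`O_p(G_x^{[1]}) = V_x (O_p(G_x^{[1]}) ∩ O_p(G_y^{[1]}))`, where `V_x` is central. -/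
theorem commutator_pKernel_eq (hxy : Γ.Adj x y) :
    ⁅pKernel G Γ p x, pKernel G Γ p x⁆ =
      ⁅pKernel G Γ p x ⊓ pKernel G Γ p y, pKernel G Γ p x ⊓ pKernel G Γ p y⁆ := by
  have hVT : vertexModule G Γ p x ≤ pArcStab G p y x :=
    (h.vertexModule_le_pKernel x).trans (h.pKernel_le_pArcStab' hxy.symm)
  have hT : pArcStab G p y x ≤ vertexModule G Γ p x ⊔ pKernel G Γ p y :=
    h.pArcStab_le_sup_of_activeNormal hxy.symm hVT ⟨hVT.trans (pArcStab_le y x),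
      inf_le_right.trans (h.stabilizer_le_normalizer_vertexModule x),
      h.not_vertexModule_le_localKernel_of_adj hxy⟩
  refine commutator_self_eq_of_le_sup ?_ inf_le_left (h.pKernel_le_centralizer_vertexModule x)
  rw [sup_comm]
  exact le_sup_inf_of_le_sup ((h.pKernel_le_pArcStab' hxy.symm).trans hT)
    (h.vertexModule_le_pKernel x) ((hVT.trans (pArcStab_le y x)).trans
      (inf_le_left.trans (h.stabilizer_le_normalizer_pKernel y)))

theorem pKernel_le_centralizer_self (x : V) :
    pKernel G Γ p x ≤ centralizer (pKernel G Γ p x) := by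
  obtain ⟨y, hxy⟩ := h.exists_adj (by linarith [h.four_le]) x
  rw [← commutator_eq_bot_iff_le_centralizer]
  refine h.eq_bot_of_le_normalizer hxy ((commutator_le_self _).trans (pKernel_le_arcStab hxy))
    (le_normalizer_commutator (h.stabilizer_le_normalizer_pKernel x)
      (h.stabilizer_le_normalizer_pKernel x)) ?_
  rw [h.commutator_pKernel_eq hxy, inf_comm, ← h.commutator_pKernel_eq hxy.symm]
  exact le_normalizer_commutator (h.stabilizer_le_normalizer_pKernel y)
    (h.stabilizer_le_normalizer_pKernel y)

end DistOne

variable [Finite G] (h : IsCriticalDist G Γ n p b)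

include h

theorem pos : 0 < b := by
  refine Nat.pos_of_ne_zero ?_
  rintro rfl
  obtain ⟨u, v, huv, hne⟩ := h.exists_not_le
  obtain rfl := h.connected.dist_eq_zero_iff.1 huv
  exact hne (h.vertexModule_le_localKernel u)

theorem vertexModule_le_pKernel_of_dist_lt (huv : Γ.dist u v < b) :
    vertexModule G Γ p u ≤ pKernel G Γ p v := by
  induction hk : Γ.dist u v generalizing v with
  | zero =>
    obtain rfl := h.connected.dist_eq_zero_iff.1 hk
    exact h.vertexModule_le_pKernel u
  | succ k ih =>
    obtain ⟨w, hvw, hw⟩ := exists_adj_dist_eq_add_one h.connected (u := u) (v := v) (by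
      rintro rfl
      simp at hk)
    exact (le_inf ((ih (by omega) (by omega)).trans (h.pKernel_le_pArcStab' hvw))
      (h.le_localKernel_of_dist_lt u v huv)).trans (pArcStab_inf_localKernel_le hvw)

theorem vertexModule_le_pArcStab (hvw : Γ.Adj v w) (huw : Γ.dist u w < b) :
    vertexModule G Γ p u ≤ pArcStab G p v w :=
  (h.vertexModule_le_pKernel_of_dist_lt huw).trans (h.pKernel_le_pArcStab' hvw)

theorem le_centralizer_of_dist_lt (huv : Γ.dist u v < b) :
    vertexModule G Γ p u ≤ centralizer (vertexModule G Γ p v) :=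
  (h.vertexModule_le_pKernel_of_dist_lt huv).trans (h.pKernel_le_centralizer_vertexModule v)

theorem vertexModule_le_stabilizer (huv : Γ.dist u v ≤ b) :
    vertexModule G Γ p u ≤ stabilizer G v := by
  obtain rfl | hne := eq_or_ne u v
  · exact (h.vertexModule_le_localKernel u).trans (localKernel_le_stabilizer u)
  obtain ⟨w, hvw, hw⟩ := exists_adj_dist_eq_add_one h.connected hne
  exact (h.vertexModule_le_pArcStab hvw (by omega)).trans ((pArcStab_le _ _).trans inf_le_left)

theorem vertexModule_le_normalizer (huv : Γ.dist u v ≤ b) :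
    vertexModule G Γ p u ≤ normalizer (vertexModule G Γ p v) :=
  (h.vertexModule_le_stabilizer huv).trans (h.stabilizer_le_normalizer_vertexModule v)

theorem ne_one : b ≠ 1 := by
  rintro rfl
  obtain ⟨x, y, hxy, -⟩ := h.exists_not_le
  rw [SimpleGraph.dist_eq_one_iff_adj] at hxy
  have hB : ∀ u, Γ.Adj x u ∨ Γ.Adj y u →
      pKernel G Γ p u ≤ normalizer (pCore p (edgeKernel G Γ x y)) := fun u hu =>
    le_normalizer_of_le_centralizer ((h.pKernel_le_centralizer_self u).trans
      (centralizer_le (h.pCore_edgeKernel_le hxy hu)))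
  exact h.pCore_edgeKernel_ne_bot x y hxy (h.eq_bot_of_activeNormal h.four_le hxy
    ((h.pCore_edgeKernel_le hxy (.inr hxy.symm)).trans (pKernel_le_arcStab hxy))
    (le_normalizer_pCore_of_le_normalizer
      (arcStab_le_normalizer_of_equivariant h.conj_smul_edgeKernel x y) p)
    (fun u hu => ⟨_, h.activeNormal_pKernel_of_adj hu, hB u (.inl hu)⟩)
    (fun u hu => ⟨_, h.activeNormal_pKernel_of_adj hu, hB u (.inr hu)⟩))

end IsCriticalDist

end CriticalDistance

section CentralizerIndex

open Subgroup

variable {G : Type*} [Group G] {K : Subgroup G} {p : ℕ}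

theorem card_modEq_card_centralizer_inf [Finite G] {q k : ℕ} (hq : q.Prime) {g : G}
    (hg : g ∈ normalizer (K : Set G)) (hk : g ^ q ^ k = 1) :
    Nat.card K ≡ Nat.card (centralizer {g} ⊓ K : Subgroup G) [MOD q] := by
  have := Fact.mk hq
  let γ : normalizer (K : Set G) := ⟨g, hg⟩
  have hP : IsPGroup q (zpowers γ) := by
    rintro ⟨_, m, rfl⟩
    refine ⟨k, Subtype.ext ?_⟩
    change (γ ^ m) ^ q ^ k = 1
    rw [← zpow_natCast, zpow_comm, zpow_natCast, show γ ^ q ^ k = 1 from Subtype.ext hk, one_zpow]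
  have hsmul : ∀ c : K, γ • c = c ↔ (c : G) ∈ centralizer {g} := fun c => by
    rw [mem_centralizer_singleton_iff, eq_comm (a := (c : G) * g), ← mul_inv_eq_iff_eq_mul,
      Subtype.ext_iff]
    rfl
  have hfix : Nat.card (fixedPoints (zpowers γ) K) =
      Nat.card (centralizer {g} ⊓ K : Subgroup G) := by
    refine Nat.card_congr ⟨fun c => ⟨(c : K), (hsmul c).1 (c.2 ⟨γ, mem_zpowers γ⟩), (c : K).2⟩,
      fun c => ⟨⟨c, c.2.2⟩, ?_⟩, fun _ => rfl, fun _ => rfl⟩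
    have hst : zpowers γ ≤ stabilizer _ (⟨(c : G), c.2.2⟩ : K) :=
      (zpowers_le (G := normalizer (K : Set G))).2 ((hsmul _).2 c.2.1)
    exact fun g => hst g.2
  exact hfix ▸ hP.card_modEq_card_fixedPoints K

theorem relIndex_mul_card_inf (C K : Subgroup G) :
    C.relIndex K * Nat.card (C ⊓ K : Subgroup G) = Nat.card K := by
  rw [← inf_relIndex_right, mul_comm, ← relIndex_bot_left, ← relIndex_bot_left]
  exact relIndex_mul_relIndex _ _ _ bot_le inf_le_right

theorem exists_relIndex_eq_pow [Finite G] (hp : p.Prime) (hK : IsPGroup p K) (C : Subgroup G) :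
    ∃ j, C.relIndex K = p ^ j := by
  have := Fact.mk hp
  exact hK.index (C.subgroupOf K)

theorem relIndex_centralizer_conj {k : G} (hk : k ∈ normalizer (K : Set G)) (g : G) :
    (centralizer {k * g * k⁻¹}).relIndex K = (centralizer {g}).relIndex K := by
  have hC : MulAut.conj k • centralizer {g} = centralizer {k * g * k⁻¹} := by
    ext c
    rw [mem_conj_smul, mem_centralizer_singleton_iff, mem_centralizer_singleton_iff,
      ← (MulAut.conj k).injective.eq_iff]
    simp [mul_assoc]
  conv_lhs => rw [← conj_smul_eq_of_le_normalizer le_rfl hk, ← hC]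
  exact relIndex_map_map_of_injective _ _ (MulAut.conj k).injective

theorem relIndex_centralizer_mul_dvd [Finite G] (hp : p.Prime) (hK : IsPGroup p K) (g h : G) :
    (centralizer {g * h}).relIndex K ∣
      (centralizer {g}).relIndex K * (centralizer {h}).relIndex K := by
  have hle : centralizer {g} ⊓ centralizer {h} ≤ centralizer {g * h} := by
    intro c hc
    rw [mem_inf, mem_centralizer_singleton_iff, mem_centralizer_singleton_iff] at hc
    obtain ⟨hcg, hch⟩ := hc
    exact mem_centralizer_singleton_iff.2 (Commute.mul_right hcg hch)
  refine (relIndex_dvd_of_le_left K hle).trans ?_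
  have hinf := relIndex_inf_le (H := centralizer {g}) (K := centralizer {h}) (L := K)
  obtain ⟨i, hi⟩ := exists_relIndex_eq_pow hp hK (centralizer {g})
  obtain ⟨j, hj⟩ := exists_relIndex_eq_pow hp hK (centralizer {h})
  obtain ⟨k, hk⟩ := exists_relIndex_eq_pow hp hK (centralizer {g} ⊓ centralizer {h})
  rw [hi, hj, hk, ← pow_add] at hinf ⊢
  exact pow_dvd_pow p ((Nat.pow_le_pow_iff_right hp.one_lt).1 hinf)

theorem exists_modEq_one_pow_pow_eq_one [Finite G] {q : ℕ} (hq : q.Prime) (g : G) :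
    ∃ m k, m ≡ 1 [MOD q] ∧ (g ^ m) ^ q ^ k = 1 := by
  obtain ⟨k, N, hN, hord⟩ := Nat.exists_eq_pow_mul_and_not_dvd (orderOf_pos g).ne' q hq.ne_one
  obtain ⟨m, hm, hmN⟩ := Nat.chineseRemainder ((Nat.Prime.coprime_iff_not_dvd hq).2 hN) 1 0
  refine ⟨m, k, hm, ?_⟩
  rw [← pow_mul, ← orderOf_dvd_iff_pow_eq_one, hord, mul_comm]
  exact Nat.mul_dvd_mul_right (Nat.modEq_zero_iff_dvd.1 hmN) _

end CentralizerIndex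

section ProductOfConjugates

open Equiv.Perm

variable {α : Type*} [Fintype α] [DecidableEq α]

theorem cycleType_eq_of_card_support_eq_four {σ : Equiv.Perm α} (h : σ.support.card = 4) :
    σ.cycleType = {4} ∨ σ.cycleType = {2, 2} := by
  have hsum := h ▸ σ.sum_cycleType
  have htwo : ∀ m ∈ σ.cycleType, 2 ≤ m := fun m => two_le_of_mem_cycleType
  revert hsum htwo
  generalize σ.cycleType = s
  have hzero : ∀ s : Multiset ℕ, (∀ m ∈ s, 2 ≤ m) → s.sum < 2 → s = 0 := fun s hs hlt =>
    Multiset.eq_zero_of_forall_notMem fun m hm => by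
      linarith [hs m hm, Multiset.le_sum_of_mem hm]
  intro hsum htwo
  induction s using Multiset.induction with
  | empty => simp at hsum
  | cons m s _ =>
    rw [Multiset.sum_cons] at hsum
    simp only [Multiset.forall_mem_cons] at htwo
    induction s using Multiset.induction with
    | empty => exact .inl (by simpa using hsum)
    | cons k s _ =>
      rw [Multiset.sum_cons] at hsum
      simp only [Multiset.forall_mem_cons] at htwo
      obtain ⟨hm, hk, hs⟩ := htwo
      obtain rfl := hzero s hs (by omega)
      rw [Multiset.sum_zero] at hsum
      obtain ⟨rfl, rfl⟩ : m = 2 ∧ k = 2 := by omega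
      exact .inr rfl

theorem exists_orderOf_mul_conj_eq_of_cycleType_eq {q : ℕ} {σ ρ : Equiv.Perm α}
    (h : σ.cycleType = ρ.cycleType) (hρ : ∃ τ, orderOf (ρ * (τ * ρ * τ⁻¹)) = q) :
    ∃ τ, orderOf (σ * (τ * σ * τ⁻¹)) = q := by
  obtain ⟨π, rfl⟩ := isConj_iff.1 (isConj_iff_cycleType_eq.2 h.symm)
  obtain ⟨τ, hτ⟩ := hρ
  refine ⟨π * τ * π⁻¹, ?_⟩
  rw [← hτ, ← MulEquiv.orderOf_eq (MulAut.conj π) (ρ * (τ * ρ * τ⁻¹)), MulAut.conj_apply]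
  congr 1
  group

set_option maxRecDepth 10000 in
theorem exists_orderOf_mul_conj_eq_five {n : ℕ} {σ : Equiv.Perm (Fin n)} (hn : n = 5 ∨ n = 6)
    (hσ : σ.support.card = n - 2) : ∃ τ, orderOf (σ * (τ * σ * τ⁻¹)) = 5 := by
  have := Fact.mk Nat.prime_five
  obtain rfl | rfl := hn
  · refine exists_orderOf_mul_conj_eq_of_cycleType_eq (ρ := c[0, 1, 2])
      ((card_support_eq_three_iff.1 hσ).cycleType.trans (by decide)) ⟨c[1, 3, 2, 4], ?_⟩
    exact orderOf_eq_prime (Equiv.ext (by decide)) (by decide)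
  · obtain h | h := cycleType_eq_of_card_support_eq_four hσ
    · refine exists_orderOf_mul_conj_eq_of_cycleType_eq (ρ := c[0, 1, 2, 3])
        (h.trans (by decide)) ⟨c[3, 4], ?_⟩
      exact orderOf_eq_prime (Equiv.ext (by decide)) (by decide)
    · refine exists_orderOf_mul_conj_eq_of_cycleType_eq (ρ := c[0, 1] * c[2, 3])
        (h.trans (by decide)) ⟨c[1, 2, 4], ?_⟩
      exact orderOf_eq_prime (Equiv.ext (by decide)) (by decide)

end ProductOfConjugates

namespace PLocPair

open Subgroup

variable {G V : Type*} [Group G] [Finite G] [MulAction G V] {Γ : SimpleGraph V} {n p : ℕ}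
  {x y : V} {ℓ : Fin n → Fin n → V} {σ : Equiv.Perm (Fin n)} {g : G} (h : PLocPair G Γ n p)

include h

theorem isPGroup_vertexModule (x : V) : IsPGroup p (vertexModule G Γ p x) :=
  (isPGroup_pCore p _).to_le (h.vertexModule_le_pKernel x)

/-- The commutator of `g` with an element inducing the transposition `(c, σ c)` moves at most three
points, so it fixes a neighbour of `x`. -/
theorem mul_self_eq_one_of_mem_centralizer (hn : 5 ≤ n) (hl : IsPairLabelling G Γ x ℓ)
    (hgx : g ∈ stabilizer G x) (hg : g ∈ centralizer (vertexModule G Γ p x : Set G))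
    (hσ : ActsAs ℓ g σ) : σ * σ = 1 := by
  ext1 c
  by_contra hne
  obtain ⟨t, htx, ht⟩ := hl.exists_actsAs (Equiv.swap c (σ c))
  obtain ⟨d, hd⟩ := exists_fin_notMem (s := {c, σ c, σ (σ c)})
    (Finset.card_le_three.trans_lt (by omega : 3 < n))
  obtain ⟨e, he⟩ := exists_fin_notMem (s := {d, c, σ c, σ (σ c)})
    (Finset.card_le_four.trans_lt (by omega : 4 < n))
  simp only [Finset.mem_insert, Finset.mem_singleton, not_or] at hd he
  have hk := (((hσ.mul ht).mul hσ.inv).mul ht.inv)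
  rw [Equiv.swap_inv, ← Equiv.swap_apply_apply] at hk
  have hfix : g * t * g⁻¹ * t⁻¹ ∈ arcStab G x (ℓ e d) := by
    refine mem_inf.2 ⟨mul_mem (mul_mem (mul_mem hgx htx) (inv_mem hgx)) (inv_mem htx), ?_⟩
    change _ • _ = _
    rw [hk e d he.1]
    simp only [Equiv.Perm.mul_apply]
    rw [Equiv.swap_apply_of_ne_of_ne he.2.1 he.2.2.1,
      Equiv.swap_apply_of_ne_of_ne he.2.2.1 he.2.2.2, Equiv.swap_apply_of_ne_of_ne hd.1 hd.2.1,
      Equiv.swap_apply_of_ne_of_ne hd.2.1 hd.2.2]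
  have hcen : g * t * g⁻¹ * t⁻¹ ∈ centralizer (vertexModule G Γ p x : Set G) := by
    rw [mul_assoc, mul_assoc, ← mul_assoc t]
    exact mul_mem hg (conj_mem_of_le_normalizer
      (le_normalizer_centralizer (h.stabilizer_le_normalizer_vertexModule x)) htx (inv_mem hg))
  have hone := hl.actsAs_unique (by omega) hk (hl.mem_localKernel_iff.1
    (h.mem_localKernel_of_mem_centralizer (hl.adj e d he.1) hfix hcen)).2
  have hc := DFunLike.congr_fun hone c
  rw [Equiv.Perm.mul_apply, Equiv.swap_apply_left, Equiv.swap_apply_left] at hc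
  exact hne hc

/-- The `5`-part `δ` of `g` also acts as `σ`. The index of its centralizer in `V_x` is `1` modulo
`5`, whereas it divides `4` or `9`; so `δ` centralizes `V_x`. -/
theorem not_relIndex_centralizer_dvd (hn : 5 ≤ n) (hl : IsPairLabelling G Γ x ℓ)
    (hgx : g ∈ stabilizer G x) (hσ : ActsAs ℓ g σ) (hord : orderOf σ = 5) :
    ¬ (centralizer {g}).relIndex (vertexModule G Γ p x) ∣ p ^ 2 := by
  intro hdvd
  have := Fact.mk h.prime
  have hp : p = 2 ∨ p = 3 := by have := h.eq_four_or_five_or_six; omega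
  obtain ⟨m, k, hm, hmk⟩ := exists_modEq_one_pow_pow_eq_one Nat.prime_five g
  have hδσ : ActsAs ℓ (g ^ m) σ := by
    have := hσ.pow m
    rwa [pow_eq_pow_iff_modEq.2 (hord.symm ▸ hm : m ≡ 1 [MOD orderOf σ]), pow_one] at this
  have hδx : g ^ m ∈ stabilizer G x := pow_mem hgx m
  have hle : centralizer {g} ≤ centralizer {g ^ m} := fun c hc => by
    rw [mem_centralizer_singleton_iff] at hc ⊢
    exact Commute.pow_right hc m
  have hidvd := (relIndex_dvd_of_le_left (vertexModule G Γ p x) hle).trans hdvd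
  have hmod := card_modEq_card_centralizer_inf (K := vertexModule G Γ p x) Nat.prime_five
    (h.stabilizer_le_normalizer_vertexModule x hδx) hmk
  have hmul := relIndex_mul_card_inf (centralizer {g ^ m}) (vertexModule G Γ p x)
  obtain ⟨j, hj⟩ := IsPGroup.iff_card.1 ((h.isPGroup_vertexModule x).to_le
    (inf_le_right : centralizer {g ^ m} ⊓ vertexModule G Γ p x ≤ _))
  have hone : (centralizer {g ^ m}).relIndex (vertexModule G Γ p x) = 1 := by
    have hcop : Nat.Coprime 5 (p ^ j) :=
      Nat.Coprime.pow_right j (by obtain rfl | rfl := hp <;> decide)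
    rw [← hmul, hj] at hmod
    obtain ⟨i, hi2, hi⟩ := (Nat.dvd_prime_pow h.prime).1 hidvd
    rw [hi] at hmod ⊢
    have hmod1 : p ^ i ≡ 1 [MOD 5] :=
      Nat.ModEq.cancel_right_of_coprime hcop (by rwa [one_mul])
    obtain rfl | rfl := hp <;> interval_cases i <;> first | rfl | (exact absurd hmod1 (by decide))
  have hsq := h.mul_self_eq_one_of_mem_centralizer hn hl hδx (mem_centralizer_iff.2 fun v hv =>
    mem_centralizer_singleton_iff.1 (relIndex_eq_one.1 hone hv)) hδσ
  have := hord ▸ orderOf_dvd_of_pow_eq_one (pow_two σ ▸ hsq)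
  omega

/-- If the index is `p` then the product of any two conjugates of `g` under `G_x` centralizes a
subgroup of `V_x` of index dividing `p ^ 2`; but one such product has order `5` on the
neighbours. -/
theorem relIndex_centralizer_ne (hn : 5 ≤ n) (hxy : Γ.Adj x y) (hg : g ∈ pArcStab G p x y)
    (hgx : g ∉ localKernel G Γ x) :
    (centralizer {g}).relIndex (vertexModule G Γ p x) ≠ p := by
  intro hi
  obtain ⟨ℓ, hl⟩ := h.exists_labelling x
  obtain ⟨a, b, hab, rfl⟩ := hl.surj y hxy
  have hgab := pArcStab_le _ _ hg
  obtain ⟨σ, hσ⟩ := hl.exists_perm g hgab.1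
  obtain ⟨hσa, hσb⟩ := hl.apply_eq_of_smul_eq hσ hab hgab.2
  have hsupp : σ.support = {a, b}ᶜ := by
    ext c
    simp only [Equiv.Perm.mem_support, Finset.mem_compl, Finset.mem_insert, Finset.mem_singleton,
      not_or]
    refine ⟨fun hc => ⟨by rintro rfl; exact hc hσa, by rintro rfl; exact hc hσb⟩,
      fun ⟨hca, hcb⟩ hc => hgx (h.mem_localKernel_of_smul_eq hl hab hg hca hcb ?_)⟩
    rw [hσ a c (Ne.symm hca), hσa, hc]
  obtain ⟨τ, hτ⟩ := exists_orderOf_mul_conj_eq_five (σ := σ)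
    (by have := h.eq_four_or_five_or_six; omega)
    (by rw [hsupp, Finset.card_compl, Fintype.card_fin, Finset.card_pair hab])
  obtain ⟨t, htx, ht⟩ := hl.exists_actsAs τ
  refine h.not_relIndex_centralizer_dvd hn hl (mul_mem hgab.1 (mul_mem (mul_mem htx hgab.1)
    (inv_mem htx))) (hσ.mul (hσ.conj ht)) hτ ?_
  have hdvd := relIndex_centralizer_mul_dvd h.prime (h.isPGroup_vertexModule x) g (t * g * t⁻¹)
  rwa [relIndex_centralizer_conj (h.stabilizer_le_normalizer_vertexModule x htx), hi, ← sq]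
    at hdvd

end PLocPair

section CriticalPaths

open Subgroup

variable {G V : Type*} [Group G] [MulAction G V] {Γ : SimpleGraph V} {n p b : ℕ}
  {u v w x y z : V} {ℓ : Fin n → Fin n → V} {a a' d d' : Fin n} {g : G}

/-- The ends `x ~ y`, `v ~ w` of a geodesic from `x` to `w` of critical length `b` such that `V_x`
and `V_w` do not commute. -/
structure IsCriticalPath (G : Type*) {V : Type*} [Group G] [MulAction G V] (Γ : SimpleGraph V)
    (p b : ℕ) (x y v w : V) : Prop where
  adj_left : Γ.Adj x y
  adj_right : Γ.Adj v w
  dist_left_lt : Γ.dist x v < b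
  dist_right_lt : Γ.dist y w < b
  dist_le : Γ.dist x w ≤ b
  not_le_centralizer : ¬ vertexModule G Γ p x ≤ centralizer (vertexModule G Γ p w)

theorem IsCriticalPath.symm (c : IsCriticalPath G Γ p b x y v w) :
    IsCriticalPath G Γ p b w v y x where
  adj_left := c.adj_right.symm
  adj_right := c.adj_left.symm
  dist_left_lt := SimpleGraph.dist_comm.trans_lt c.dist_right_lt
  dist_right_lt := SimpleGraph.dist_comm.trans_lt c.dist_left_lt
  dist_le := SimpleGraph.dist_comm.trans_le c.dist_le
  not_le_centralizer := fun hle => c.not_le_centralizer (le_centralizer_iff.1 hle)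

theorem eq_two_and_pow_eq_of_pow_le {j k : ℕ}
    (hnp : (n = 4 ∧ p = 2) ∨ (n = 5 ∧ p = 3) ∨ (n = 6 ∧ p = 2)) (hk : p ^ k ≤ n - 2)
    (hjk : j ≤ k) (hj : j ≠ 0) (hj₁ : 5 ≤ n → j ≠ 1) :
    p = 2 ∧ p ^ j = n - 2 ∧ p ^ k = n - 2 := by
  have hp : 2 ≤ p := by omega
  have hk₂ : k ≤ 2 := by
    by_contra! hlt
    have : 2 ^ 3 ≤ p ^ k := (Nat.pow_le_pow_left hp 3).trans (Nat.pow_le_pow_right (by omega) hlt)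
    omega
  obtain ⟨rfl, rfl⟩ | ⟨rfl, rfl⟩ | ⟨rfl, rfl⟩ := hnp <;> interval_cases k <;> interval_cases j <;>
    simp_all

namespace IsCriticalDist

variable [Finite G] (h : IsCriticalDist G Γ n p b)

include h

theorem two_le : 2 ≤ b := by
  have := h.pos
  have := h.ne_one
  omega

theorem le_centralizer_iff (huv : Γ.dist u v ≤ b) :
    vertexModule G Γ p u ≤ centralizer (vertexModule G Γ p v) ↔
      vertexModule G Γ p u ≤ localKernel G Γ v := by
  obtain rfl | hne := eq_or_ne u v
  · exact iff_of_true (h.vertexModule_le_centralizer_self u) (h.vertexModule_le_localKernel u)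
  obtain ⟨w, hvw, hw⟩ := exists_adj_dist_eq_add_one h.connected hne
  exact h.le_centralizer_vertexModule_iff hvw (h.vertexModule_le_pArcStab hvw (by omega))

theorem vertexModule_le_pKernel_of_le_centralizer (huv : Γ.dist u v ≤ b)
    (hle : vertexModule G Γ p u ≤ centralizer (vertexModule G Γ p v)) :
    vertexModule G Γ p u ≤ pKernel G Γ p v := by
  obtain rfl | hne := eq_or_ne u v
  · exact h.vertexModule_le_pKernel u
  obtain ⟨w, hvw, hw⟩ := exists_adj_dist_eq_add_one h.connected hne
  exact (le_inf (h.vertexModule_le_pArcStab hvw (by omega))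
    ((h.le_centralizer_iff huv).1 hle)).trans (pArcStab_inf_localKernel_le hvw)

theorem exists_isCriticalPath : ∃ x y v w, IsCriticalPath G Γ p b x y v w := by
  obtain ⟨x, w, hxw, hV⟩ := h.exists_not_le
  have hne : x ≠ w := by
    rintro rfl
    exact hV (h.vertexModule_le_localKernel x)
  obtain ⟨v, hwv, hv⟩ := exists_adj_dist_eq_add_one h.connected hne
  obtain ⟨y, hxy, hy⟩ := exists_adj_dist_eq_add_one h.connected hne.symm
  rw [SimpleGraph.dist_comm, SimpleGraph.dist_comm (u := w) (v := y)] at hy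
  exact ⟨x, y, v, w, hxy, hwv.symm, by omega, by omega, by omega,
    by rwa [h.le_centralizer_iff hxw.le]⟩

end IsCriticalDist

namespace IsCriticalPath

variable [Finite G] (c : IsCriticalPath G Γ p b x y v w) (h : IsCriticalDist G Γ n p b)

include c h

theorem dist_eq : Γ.dist x w = b :=
  c.dist_le.eq_of_not_lt fun hlt => c.not_le_centralizer (h.le_centralizer_of_dist_lt hlt)

theorem dist_left_eq : Γ.dist x v + 1 = b := by
  have := c.dist_eq h
  have := c.dist_left_lt
  have := c.adj_right.diff_dist_adj (u := x)
  omega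

theorem vertexModule_le_pArcStab : vertexModule G Γ p w ≤ pArcStab G p x y :=
  h.vertexModule_le_pArcStab c.adj_left c.symm.dist_left_lt

theorem vertexModule_le_arcStab : vertexModule G Γ p w ≤ arcStab G x y :=
  (c.vertexModule_le_pArcStab h).trans (pArcStab_le x y)

theorem exists_notMem_localKernel : ∃ g ∈ vertexModule G Γ p w, g ∉ localKernel G Γ x :=
  SetLike.not_le_iff_exists.1
    (by rw [← h.le_centralizer_iff c.symm.dist_le]; exact c.symm.not_le_centralizer)

theorem inf_localKernel_le_centralizer (hg : g ∈ vertexModule G Γ p w) :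
    localKernel G Γ w ⊓ vertexModule G Γ p x ≤ centralizer {g} := by
  refine ((le_inf (inf_le_right.trans (c.symm.vertexModule_le_pArcStab h)) inf_le_left).trans
    (pArcStab_inf_localKernel_le c.adj_right.symm)).trans
    ((h.pKernel_le_centralizer_vertexModule w).trans (centralizer_le ?_))
  simpa using hg

theorem relIndex_eq (hg : g ∈ vertexModule G Γ p w) (hgx : g ∉ localKernel G Γ x) :
    p = 2 ∧ (centralizer {g}).relIndex (vertexModule G Γ p x) = n - 2 ∧
      (localKernel G Γ w).relIndex (vertexModule G Γ p x) = n - 2 := by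
  have hgT := c.vertexModule_le_pArcStab h hg
  have hV := h.isPGroup_vertexModule x
  obtain ⟨j, hj⟩ := exists_relIndex_eq_pow h.prime hV (centralizer {g})
  obtain ⟨k, hk⟩ := exists_relIndex_eq_pow h.prime hV (localKernel G Γ w)
  have hdvd : (centralizer {g}).relIndex (vertexModule G Γ p x) ∣
      (localKernel G Γ w).relIndex (vertexModule G Γ p x) := by
    rw [← inf_relIndex_right (localKernel G Γ w)]
    exact relIndex_dvd_of_le_left _ (c.inf_localKernel_le_centralizer h hg)
  rw [hj, hk] at hdvd ⊢
  refine eq_two_and_pow_eq_of_pow_le h.eq_four_or_five_or_six ?_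
    ((Nat.pow_dvd_pow_iff_le_right h.prime.one_lt).1 hdvd) ?_ ?_
  · exact hk ▸ h.relIndex_localKernel_le c.adj_right.symm (c.symm.vertexModule_le_pArcStab h)
  · rintro rfl
    rw [pow_zero, relIndex_eq_one] at hj
    exact hgx (h.mem_localKernel_of_mem_centralizer c.adj_left (pArcStab_le x y hgT)
      fun k hk => mem_centralizer_singleton_iff.1 (hj hk))
  · rintro hn rfl
    exact h.relIndex_centralizer_ne hn c.adj_left hgT hgx (hj.trans (pow_one p))

theorem prime_eq_two : p = 2 :=
  let ⟨_, hg, hgx⟩ := c.exists_notMem_localKernel h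
  (c.relIndex_eq h hg hgx).1

theorem relIndex_localKernel_eq : (localKernel G Γ x).relIndex (vertexModule G Γ p w) = n - 2 :=
  let ⟨_, hg, hgw⟩ := c.symm.exists_notMem_localKernel h
  (c.symm.relIndex_eq h hg hgw).2.2

theorem not_commute {k : G} (hg : g ∈ vertexModule G Γ p w) (hgx : g ∉ localKernel G Γ x)
    (hk : k ∈ vertexModule G Γ p x) (hkw : k ∉ localKernel G Γ w) : ¬ Commute k g := by
  intro hkg
  obtain ⟨-, hC, hN⟩ := c.relIndex_eq h hg hgx
  have hcard := (relIndex_mul_card_inf (centralizer {g}) (vertexModule G Γ p x)).trans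
    (relIndex_mul_card_inf (localKernel G Γ w) (vertexModule G Γ p x)).symm
  have hn := h.four_le
  rw [hC, hN, Nat.mul_right_inj (by omega)] at hcard
  have heq := eq_of_le_of_card_ge
    (le_inf (c.inf_localKernel_le_centralizer h hg) inf_le_right) hcard.le
  have hmem : k ∈ centralizer {g} ⊓ vertexModule G Γ p x :=
    mem_inf.2 ⟨mem_centralizer_singleton_iff.2 hkg, hk⟩
  exact hkw (mem_inf.1 (heq ▸ hmem)).1

theorem exists_mem_actsAs (hl : IsPairLabelling G Γ x ℓ) (ha : a ≠ a') (hy : ℓ a a' = y)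
    (hd : d ≠ a ∧ d ≠ a') (hd' : d' ≠ a ∧ d' ≠ a') :
    ∃ g ∈ vertexModule G Γ p w, ∃ σ, ActsAs ℓ g σ ∧ σ a = a ∧ σ a' = a' ∧ σ d = d' := by
  subst hy
  obtain ⟨g, hg, hgd⟩ := h.exists_mem_smul_eq_of_relIndex_eq hl ha (c.vertexModule_le_pArcStab h)
    (c.relIndex_localKernel_eq h) hd.1 hd.2 hd'.1 hd'.2
  have hgx := c.vertexModule_le_arcStab h hg
  obtain ⟨σ, hσ⟩ := hl.exists_perm g hgx.1
  obtain ⟨σa, σa'⟩ := hl.apply_eq_of_smul_eq hσ ha hgx.2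
  rw [hσ a d hd.1.symm] at hgd
  exact ⟨g, hg, σ, hσ, σa, σa',
    (hl.inj _ _ _ _ (σ.injective.ne hd.1.symm) hd'.1.symm hgd).2⟩

theorem pArcStab_le_sup : pArcStab G p x y ≤ vertexModule G Γ p w ⊔ pKernel G Γ p x := by
  obtain ⟨ℓ, hl⟩ := h.exists_labelling x
  obtain ⟨a, a', ha, rfl⟩ := hl.surj y c.adj_left
  have hK := c.vertexModule_le_pArcStab h
  obtain ⟨d, hda, hda'⟩ := exists_fin_ne_ne (Nat.le_of_succ_le h.four_le) a a'
  exact h.pArcStab_le_sup_of_transitive hl ha hK hda hda' fun d' =>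
    h.exists_mem_smul_eq_of_relIndex_eq hl ha hK (c.relIndex_localKernel_eq h) hda hda'

theorem commutator_le_of_le_pArcStab {K : Subgroup G} (hK : K ≤ pArcStab G p x y) :
    ⁅vertexModule G Γ p x, K⁆ ≤ ⁅vertexModule G Γ p x, vertexModule G Γ p w⁆ :=
  commutator_le_of_le_sup (hK.trans (c.pArcStab_le_sup h))
    ((c.vertexModule_le_arcStab h).trans (inf_le_left.trans (h.stabilizer_le_normalizer_pKernel x)))
    (h.pKernel_le_centralizer_vertexModule x)

theorem commutator_pArcStab_eq :
    ⁅vertexModule G Γ p x, pArcStab G p x y⁆ =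
      ⁅vertexModule G Γ p x, vertexModule G Γ p w⁆ :=
  le_antisymm (c.commutator_le_of_le_pArcStab h le_rfl)
    (commutator_mono le_rfl (c.vertexModule_le_pArcStab h))

end IsCriticalPath

end CriticalPaths

section CriticalNeighbors

open Subgroup

variable {G V A : Type*} [Group G] [MulAction G V] {Γ : SimpleGraph V} {n p b : ℕ}
  {u v v' w x y z : V} {ℓ : Fin n → Fin n → V} {a a' c d d' : Fin n} {g : G}

/-- The partition of the neighbours of `x` into the fibres of `F` is `G_x`-invariant. -/
def HasInvariantFibers (G : Type*) {V A : Type*} [Group G] [MulAction G V] (Γ : SimpleGraph V)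
    (x : V) (F : V → A) : Prop :=
  ∀ g : G, g • x = x → ∀ z z', Γ.Adj x z → Γ.Adj x z' → F z = F z' → F (g • z) = F (g • z')

namespace HasInvariantFibers

theorem of_conj_smul {F : V → Subgroup G}
    (hF : ∀ g : G, g • x = x → ∀ z, MulAut.conj g • F z = F (g • z)) :
    HasInvariantFibers G Γ x F :=
  fun g hg z z' _ _ he => by rw [← hF g hg z, ← hF g hg z', he]

variable {F : V → A} (hF : HasInvariantFibers G Γ x F) (hl : IsPairLabelling G Γ x ℓ)

include hF hl

theorem row_eq (hd : a ≠ d) (hd' : a ≠ d') (hdd' : d ≠ d') (he : F (ℓ a d) = F (ℓ a d'))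
    (q r r' : Fin n) (hr : q ≠ r) (hr' : q ≠ r') : F (ℓ q r) = F (ℓ q r') := by
  obtain rfl | hrr' := eq_or_ne r r'
  · rfl
  obtain ⟨σ, hσ⟩ := exists_perm_map_eq (l := [a, d, d']) (l' := [q, r, r'])
    (by simp [hd, hd', hdd']) (by simp [hr, hr', hrr']) rfl
  simp only [List.map_cons, List.map_nil, List.cons.injEq, and_true] at hσ
  obtain ⟨σa, σd, σd'⟩ := hσ
  obtain ⟨g, hg, hgσ⟩ := hl.exists_actsAs σ
  simpa only [hgσ a d hd, hgσ a d' hd', σa, σd, σd'] using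
    hF g hg _ _ (hl.adj a d hd) (hl.adj a d' hd') he

theorem eq_of_row_eq (hrow : ∀ q r r', q ≠ r → q ≠ r' → F (ℓ q r) = F (ℓ q r'))
    (hac : a ≠ c) (hd : a ≠ d) (hd' : c ≠ d') (he : F (ℓ a d) = F (ℓ c d'))
    {z z' : V} (hz : Γ.Adj x z) (hz' : Γ.Adj x z') : F z = F z' := by
  obtain ⟨q, r, hqr, rfl⟩ := hl.surj z hz
  obtain ⟨s, t, hst, rfl⟩ := hl.surj z' hz'
  obtain rfl | hqs := eq_or_ne q s
  · exact hrow _ _ _ hqr hst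
  obtain ⟨σ, hσ⟩ := exists_perm_map_eq (l := [a, c]) (l' := [q, s])
    (by simp [hac]) (by simp [hqs]) rfl
  simp only [List.map_cons, List.map_nil, List.cons.injEq, and_true] at hσ
  obtain ⟨rfl, rfl⟩ := hσ
  obtain ⟨g, hg, hgσ⟩ := hl.exists_actsAs σ
  calc F (ℓ (σ a) r) = F (ℓ (σ a) (σ d)) := hrow _ _ _ hqr (σ.injective.ne hd)
    _ = F (ℓ (σ c) (σ d')) := by
      simpa only [hgσ a d hd, hgσ c d' hd'] using
        hF g hg _ _ (hl.adj a d hd) (hl.adj c d' hd') he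
    _ = F (ℓ (σ c) t) := hrow _ _ _ (σ.injective.ne hd') hst

end HasInvariantFibers

theorem LocPair.vertexModule_smul_le_centralizer_iff (hL : LocPair G Γ n) (g : G) (u v : V) :
    vertexModule G Γ p (g • u) ≤ centralizer (vertexModule G Γ p (g • v)) ↔
      vertexModule G Γ p u ≤ centralizer (vertexModule G Γ p v) := by
  have key : ∀ (g : G) (u v : V),
      vertexModule G Γ p u ≤ centralizer (vertexModule G Γ p v) →
        vertexModule G Γ p (g • u) ≤ centralizer (vertexModule G Γ p (g • v)) :=
    fun g u v hle => by
      simpa only [hL.conj_smul_vertexModule] using conj_smul_le_centralizer hle g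
  exact ⟨fun hle => by simpa only [inv_smul_smul] using key g⁻¹ _ _ hle, key g u v⟩

theorem LocPair.hasInvariantFibers_sup_vertexModule (hL : LocPair G Γ n) (x : V) :
    HasInvariantFibers G Γ x fun z => vertexModule G Γ p z ⊔ vertexModule G Γ p x :=
  .of_conj_smul fun g hg z => by
    rw [smul_sup, hL.conj_smul_vertexModule, hL.conj_smul_vertexModule, hg]

theorem PLocPair.exists_sup_vertexModule_ne [Finite G] (h : PLocPair G Γ n p) (x : V) :
    ∃ z z', Γ.Adj x z ∧ Γ.Adj x z' ∧
      vertexModule G Γ p z ⊔ vertexModule G Γ p x ≠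
        vertexModule G Γ p z' ⊔ vertexModule G Γ p x := by
  by_contra! heq
  obtain ⟨y, hxy⟩ := h.exists_adj (by linarith [h.four_le]) x
  have hF : ∀ (g : G) u v, MulAut.conj g • (vertexModule G Γ p v ⊔ vertexModule G Γ p u) =
      vertexModule G Γ p (g • v) ⊔ vertexModule G Γ p (g • u) := fun g u v => by
    rw [smul_sup, h.conj_smul_vertexModule, h.conj_smul_vertexModule]
  refine h.vertexModule_ne_bot x (eq_bot_mono le_sup_right (h.eq_bot_of_equivariant
    (F := fun u v => vertexModule G Γ p v ⊔ vertexModule G Γ p u) hxy hF (sup_comm _ _)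
    (sup_le ((h.vertexModule_le_localKernel y).trans (localKernel_le_arcStab' hxy))
      ((h.vertexModule_le_localKernel x).trans (localKernel_le_arcStab hxy))) ?_))
  refine le_normalizer_iff_conj_smul_eq.2 fun g hg => ?_
  rw [hF, mem_stabilizer_iff.1 hg]
  exact heq _ _ (h.adj_smul_of_smul_eq hg hxy) hxy

namespace IsCriticalPath

theorem of_adj (hc : IsCriticalPath G Γ p b x y v w) (hz : Γ.Adj x z) (hv : Γ.Adj v v')
    (hlt : Γ.dist x v' < Γ.dist x v)
    (hzv : ¬ vertexModule G Γ p z ≤ centralizer (vertexModule G Γ p v)) :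
    IsCriticalPath G Γ p b z x v' v := by
  have hdist : ∀ u, Γ.dist z u ≤ Γ.dist x u + 1 := fun u => by
    have := hz.diff_dist_adj (u := u)
    rw [SimpleGraph.dist_comm, SimpleGraph.dist_comm (u := x)]
    omega
  have hxv := hc.dist_left_lt
  exact ⟨hz.symm, hv.symm, by linarith [hdist v'], hxv, by linarith [hdist v], hzv⟩

variable [Finite G] (hc : IsCriticalPath G Γ p b x y v w) (h : IsCriticalDist G Γ n p b)

include hc h

theorem exists_isCriticalPath_of_adj (hz : Γ.Adj x z)
    (hzv : ¬ vertexModule G Γ p z ≤ centralizer (vertexModule G Γ p v)) :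
    ∃ v', IsCriticalPath G Γ p b z x v' v := by
  have hxv : x ≠ v := by
    rintro rfl
    have := hc.dist_left_eq h
    have := h.two_le
    rw [SimpleGraph.dist_self] at *
    omega
  obtain ⟨v', hv', hd⟩ := exists_adj_dist_eq_add_one h.connected hxv
  exact ⟨v', hc.of_adj hz hv' (by omega) hzv⟩

theorem not_le_centralizer_smul (hg : g ∈ vertexModule G Γ p w)
    (hzv : ¬ vertexModule G Γ p z ≤ centralizer (vertexModule G Γ p v)) :
    ¬ vertexModule G Γ p (g • z) ≤ centralizer (vertexModule G Γ p v) := by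
  have hgv : g • v = v :=
    (mem_localKernel.1 (h.vertexModule_le_localKernel w hg)).2 v hc.adj_right.symm
  rwa [← hgv, h.vertexModule_smul_le_centralizer_iff]

theorem sup_vertexModule_smul_eq (hz : Γ.Adj x z)
    (hzv : vertexModule G Γ p z ≤ centralizer (vertexModule G Γ p v))
    (hg : g ∈ vertexModule G Γ p w) :
    vertexModule G Γ p (g • z) ⊔ vertexModule G Γ p x =
      vertexModule G Γ p z ⊔ vertexModule G Γ p x := by
  have hdist : Γ.dist z v ≤ b := by
    have := hz.diff_dist_adj (u := v)
    have := hc.dist_left_lt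
    rw [SimpleGraph.dist_comm] at this ⊢
    omega
  have hwx := h.vertexModule_le_normalizer hc.symm.dist_le
  have hle : vertexModule G Γ p z ≤ pArcStab G p w v :=
    (h.vertexModule_le_pKernel_of_le_centralizer hdist hzv).trans
      (h.pKernel_le_pArcStab' hc.adj_right.symm)
  have hN := le_normalizer_sup_of_commutator_le hwx
    ((hc.symm.commutator_le_of_le_pArcStab h hle).trans
      (le_normalizer_iff_commutator_le_right.1 hwx))
  have hgx : g • x = x := (hc.vertexModule_le_arcStab h hg).1
  simpa only [smul_sup, h.conj_smul_vertexModule, hgx] using conj_smul_eq_of_le_normalizer hN hg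

theorem sup_vertexModule_row_eq (hl : IsPairLabelling G Γ x ℓ) (ha : a ≠ a') (hy : ℓ a a' = y)
    (hd : d ≠ a ∧ d ≠ a')
    (hcen : vertexModule G Γ p (ℓ a d) ≤ centralizer (vertexModule G Γ p v) ∨
      vertexModule G Γ p (ℓ a' d) ≤ centralizer (vertexModule G Γ p v))
    (q r r' : Fin n) (hr : q ≠ r) (hr' : q ≠ r') :
    vertexModule G Γ p (ℓ q r) ⊔ vertexModule G Γ p x =
      vertexModule G Γ p (ℓ q r') ⊔ vertexModule G Γ p x := by
  obtain ⟨d', hd'⟩ := exists_fin_notMem (s := {a, a', d})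
    (Finset.card_le_three.trans_lt h.four_le)
  simp only [Finset.mem_insert, Finset.mem_singleton, not_or] at hd'
  obtain ⟨hda, hda', hdd⟩ := hd'
  obtain ⟨g, hg, σ, hσ, σa, σa', σd⟩ := hc.exists_mem_actsAs h hl ha hy hd ⟨hda, hda'⟩
  have hF := h.hasInvariantFibers_sup_vertexModule (p := p) x
  obtain hcen | hcen := hcen
  · have heq := hc.sup_vertexModule_smul_eq h (hl.adj a d hd.1.symm) hcen hg
    rw [hσ a d hd.1.symm, σa, σd] at heq
    exact hF.row_eq hl (Ne.symm hda) hd.1.symm hdd heq q r r' hr hr'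
  · have heq := hc.sup_vertexModule_smul_eq h (hl.adj a' d hd.2.symm) hcen hg
    rw [hσ a' d hd.2.symm, σa', σd] at heq
    exact hF.row_eq hl (Ne.symm hda') hd.2.symm hdd heq q r r' hr hr'

theorem exists_labelling_forall_not_le_centralizer :
    ∃ (ℓ : Fin n → Fin n → V) (a a' : Fin n), IsPairLabelling G Γ x ℓ ∧ a ≠ a' ∧ ℓ a a' = y ∧
      ∀ d, d ≠ a ∧ d ≠ a' →
        ¬ vertexModule G Γ p (ℓ a d) ≤ centralizer (vertexModule G Γ p v) ∧
        ¬ vertexModule G Γ p (ℓ a' d) ≤ centralizer (vertexModule G Γ p v) := by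
  obtain ⟨ℓ, hl⟩ := h.exists_labelling x
  obtain ⟨a, a', ha, hy⟩ := hl.surj y hc.adj_left
  by_contra! hcon
  obtain ⟨d, hd, hcen⟩ := hcon ℓ a a' hl ha hy
  obtain ⟨e, he, hcen'⟩ := hcon _ a' a hl.swap ha.symm hy
  have hrow := hc.sup_vertexModule_row_eq h hl ha hy hd (or_iff_not_imp_left.2 hcen)
  have hcol := hc.sup_vertexModule_row_eq h hl.swap ha.symm hy he (or_iff_not_imp_left.2 hcen')
  obtain ⟨z, z', hz, hz', hne⟩ := h.exists_sup_vertexModule_ne x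
  exact hne ((h.hasInvariantFibers_sup_vertexModule x).eq_of_row_eq hl hrow ha hd.1.symm
    hd.2.symm (hcol d a a' hd.1 hd.2) hz hz')

theorem exists_adj_not_le_centralizer :
    ∃ z, Γ.Adj x z ∧ ¬ vertexModule G Γ p z ≤ centralizer (vertexModule G Γ p v) := by
  obtain ⟨ℓ, a, a', hl, -, -, hcrit⟩ := hc.exists_labelling_forall_not_le_centralizer h
  obtain ⟨d, hd⟩ := exists_fin_ne_ne (Nat.le_of_succ_le h.four_le) a a'
  exact ⟨ℓ a d, hl.adj a d hd.1.symm, (hcrit d hd).1⟩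

theorem eq_of_forall_eq_smul {F : V → A} (hF : HasInvariantFibers G Γ x F)
    (hFg : ∀ z, Γ.Adj x z → ¬ vertexModule G Γ p z ≤ centralizer (vertexModule G Γ p v) →
      ∀ g ∈ vertexModule G Γ p w, F z = F (g • z))
    {z z' : V} (hz : Γ.Adj x z) (hz' : Γ.Adj x z') : F z = F z' := by
  obtain ⟨ℓ, a, a', hl, ha, hy, hcrit⟩ := hc.exists_labelling_forall_not_le_centralizer h
  obtain ⟨d, hd⟩ := exists_fin_ne_ne (Nat.le_of_succ_le h.four_le) a a'
  obtain ⟨d', hd'⟩ := exists_fin_notMem (s := {a, a', d})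
    (Finset.card_le_three.trans_lt h.four_le)
  simp only [Finset.mem_insert, Finset.mem_singleton, not_or] at hd'
  obtain ⟨hda, hda', hdd⟩ := hd'
  obtain ⟨g, hg, σ, hσ, σa, -, σd⟩ := hc.exists_mem_actsAs h hl ha hy hd ⟨hda, hda'⟩
  have hrow : ∀ q r r', q ≠ r → q ≠ r' → F (ℓ q r) = F (ℓ q r') := by
    have heq := hFg _ (hl.adj a d hd.1.symm) (hcrit d hd).1 g hg
    rw [hσ a d hd.1.symm, σa, σd] at heq
    exact hF.row_eq hl hd.1.symm (Ne.symm hda) (Ne.symm hdd) heq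
  obtain ⟨e, hde, hd'e, hcen⟩ : ∃ e, d ≠ e ∧ d' ≠ σ e ∧
      ¬ vertexModule G Γ p (ℓ d e) ≤ centralizer (vertexModule G Γ p v) := by
    by_cases hcen : vertexModule G Γ p (ℓ d a) ≤ centralizer (vertexModule G Γ p v)
    · refine ⟨d', Ne.symm hdd, fun he => hdd (σ.injective (he.symm.trans σd.symm)),
        fun hcen' => (hcrit d' ⟨hda, hda'⟩).1 ?_⟩
      have hcol := hc.sup_vertexModule_row_eq h hl.swap ha.symm hy hd.symm (.inr hcen)
        d' a d hda hdd
      exact le_sup_left.trans (hcol.le.trans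
        (sup_le hcen' (h.le_centralizer_of_dist_lt hc.dist_left_lt)))
    · exact ⟨a, hd.1, by rwa [σa], hcen⟩
  have heq := hFg _ (hl.adj d e hde) hcen g hg
  rw [hσ d e hde, σd] at heq
  exact hF.eq_of_row_eq hl hrow (Ne.symm hdd) hde hd'e heq hz hz'

end IsCriticalPath

end CriticalNeighbors

section NeighborCommutator

open Subgroup

variable {G V : Type*} [Group G] [MulAction G V] {Γ : SimpleGraph V} {n p b : ℕ}
  {q u v w x y z z' : V} {g : G}

/-- `R_x`, the subgroup generated by the commutators `[V_z, O_p(G_{zx})]` for `z ~ x`. -/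
def neighborCommutator (G : Type*) {V : Type*} [Group G] [MulAction G V] (Γ : SimpleGraph V)
    (p : ℕ) (x : V) : Subgroup G :=
  ⨆ z : Γ.neighborSet x, ⁅vertexModule G Γ p z, pArcStab G p (z : V) x⁆

theorem LocPair.conj_smul_commutator_pArcStab (hL : LocPair G Γ n) (g : G) (z x : V) :
    MulAut.conj g • ⁅vertexModule G Γ p z, pArcStab G p z x⁆ =
      ⁅vertexModule G Γ p (g • z), pArcStab G p (g • z) (g • x)⁆ := by
  rw [conj_smul_commutator, hL.conj_smul_vertexModule, conj_smul_pArcStab]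

namespace IsCriticalPath

variable [Finite G] (hc : IsCriticalPath G Γ p b x y v w) (h : IsCriticalDist G Γ n p b)

include hc h

/-- For `z` critical to `v`, the commutator at `z` lies in `V_v`, which `V_w` centralises. -/
theorem commutator_pArcStab_eq_of_adj (hz : Γ.Adj x z) (hz' : Γ.Adj x z') :
    ⁅vertexModule G Γ p z, pArcStab G p z x⁆ = ⁅vertexModule G Γ p z', pArcStab G p z' x⁆ := by
  refine hc.eq_of_forall_eq_smul h (F := fun z => ⁅vertexModule G Γ p z, pArcStab G p z x⁆)
    (.of_conj_smul fun g hg z => ?_) (fun z hz hzv g hg => ?_) hz hz'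
  · rw [h.conj_smul_commutator_pArcStab, hg]
  · obtain ⟨v', hv'⟩ := hc.exists_isCriticalPath_of_adj h hz hzv
    have hle : ⁅vertexModule G Γ p z, pArcStab G p z x⁆ ≤ vertexModule G Γ p v := by
      rw [hv'.commutator_pArcStab_eq h]
      exact le_normalizer_iff_commutator_le_right.1 (h.vertexModule_le_normalizer hv'.dist_le)
    have hwv : Γ.dist w v < b := by
      have := h.two_le
      rw [SimpleGraph.dist_eq_one_iff_adj.2 hc.adj_right.symm]
      omega
    have hN : vertexModule G Γ p w ≤
        normalizer (⁅vertexModule G Γ p z, pArcStab G p z x⁆ : Subgroup G) :=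
      le_normalizer_of_le_centralizer
        ((h.le_centralizer_of_dist_lt hwv).trans (centralizer_le hle))
    have hgx : g • x = x := (hc.vertexModule_le_arcStab h hg).1
    have heq := conj_smul_eq_of_le_normalizer hN hg
    rw [h.conj_smul_commutator_pArcStab, hgx] at heq
    exact heq.symm

end IsCriticalPath

namespace IsCriticalDist

variable [Finite G] (h : IsCriticalDist G Γ n p b)

include h

theorem commutator_pArcStab_eq_of_adj (hz : Γ.Adj x z) (hz' : Γ.Adj x z') :
    ⁅vertexModule G Γ p z, pArcStab G p z x⁆ = ⁅vertexModule G Γ p z', pArcStab G p z' x⁆ := by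
  obtain ⟨u, _, _, _, hc⟩ := h.exists_isCriticalPath
  obtain ⟨g, rfl⟩ := h.exists_smul_eq u x
  have heq := hc.commutator_pArcStab_eq_of_adj h ((h.adj_inv_smul_iff g u z).2 hz)
    ((h.adj_inv_smul_iff g u z').2 hz')
  simpa only [h.conj_smul_commutator_pArcStab, smul_inv_smul] using
    congrArg (MulAut.conj g • ·) heq

theorem neighborCommutator_eq (hz : Γ.Adj x z) :
    neighborCommutator G Γ p x = ⁅vertexModule G Γ p z, pArcStab G p z x⁆ :=
  le_antisymm (iSup_le fun z' => (h.commutator_pArcStab_eq_of_adj z'.2 hz).le)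
    (le_iSup (fun z : Γ.neighborSet x => ⁅vertexModule G Γ p z, pArcStab G p (z : V) x⁆) ⟨z, hz⟩)

theorem conj_smul_neighborCommutator (g : G) (x : V) :
    MulAut.conj g • neighborCommutator G Γ p x = neighborCommutator G Γ p (g • x) := by
  obtain ⟨y, hxy⟩ := h.exists_adj (by linarith [h.four_le]) x
  rw [h.neighborCommutator_eq hxy, h.neighborCommutator_eq (h.adj g _ _ hxy),
    h.conj_smul_commutator_pArcStab]

theorem stabilizer_le_normalizer_neighborCommutator (x : V) :
    stabilizer G x ≤ normalizer (neighborCommutator G Γ p x) :=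
  stabilizer_le_normalizer_of_equivariant h.conj_smul_neighborCommutator x

theorem neighborCommutator_le_vertexModule (hz : Γ.Adj x z) :
    neighborCommutator G Γ p x ≤ vertexModule G Γ p z := by
  rw [h.neighborCommutator_eq hz]
  exact le_normalizer_iff_commutator_le_left.1 ((pArcStab_le z x).trans
    (inf_le_left.trans (h.stabilizer_le_normalizer_vertexModule z)))

theorem neighborCommutator_le_arcStab (hz : Γ.Adj x z) :
    neighborCommutator G Γ p x ≤ arcStab G x z :=
  (h.neighborCommutator_le_vertexModule hz).trans
    ((h.vertexModule_le_localKernel z).trans (localKernel_le_arcStab' hz))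

theorem commutator_vertexModule_le_neighborCommutator (hu : Γ.Adj q u) (hv : Γ.Adj q v) :
    ⁅vertexModule G Γ p u, vertexModule G Γ p v⁆ ≤ neighborCommutator G Γ p q := by
  have hvq : Γ.dist v q < b := by
    have := h.two_le
    rw [SimpleGraph.dist_eq_one_iff_adj.2 hv.symm]
    omega
  rw [h.neighborCommutator_eq hu]
  exact commutator_mono le_rfl (h.vertexModule_le_pArcStab hu.symm hvq)

end IsCriticalDist

namespace IsCriticalPath

variable [Finite G] (hc : IsCriticalPath G Γ p b x y v w) (h : IsCriticalDist G Γ n p b)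

include hc h

theorem neighborCommutator_left_eq :
    neighborCommutator G Γ p y = ⁅vertexModule G Γ p x, vertexModule G Γ p w⁆ := by
  rw [h.neighborCommutator_eq hc.adj_left.symm, hc.commutator_pArcStab_eq h]

theorem neighborCommutator_eq_neighborCommutator :
    neighborCommutator G Γ p y = neighborCommutator G Γ p v := by
  rw [hc.neighborCommutator_left_eq h, hc.symm.neighborCommutator_left_eq h, commutator_comm]

theorem neighborCommutator_left_ne_bot : neighborCommutator G Γ p y ≠ ⊥ := by
  rw [hc.neighborCommutator_left_eq h, Ne, commutator_eq_bot_iff_le_centralizer]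
  exact hc.not_le_centralizer

theorem exists_neighborCommutator_eq_of_three_le (hb : 3 ≤ b) :
    ∃ t, ∀ z, Γ.Adj x z → ¬ vertexModule G Γ p z ≤ centralizer (vertexModule G Γ p v) →
      neighborCommutator G Γ p z = neighborCommutator G Γ p t := by
  have hxv := hc.dist_left_eq h
  have hne : ∀ {u}, 0 < Γ.dist x u → x ≠ u := by
    rintro u hu rfl
    simp at hu
  obtain ⟨s, hvs, hs⟩ := exists_adj_dist_eq_add_one h.connected (hne (u := v) (by omega))
  obtain ⟨t, hst, ht⟩ := exists_adj_dist_eq_add_one h.connected (hne (u := s) (by omega))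
  refine ⟨t, fun z hxz hzv => ?_⟩
  have hc₁ : IsCriticalPath G Γ p b z x s v := hc.of_adj hxz hvs (by omega) hzv
  obtain ⟨z', hz', hzs⟩ := hc₁.exists_adj_not_le_centralizer h
  have hlt : Γ.dist z t < Γ.dist z s := by
    have := hc₁.dist_left_eq h
    have := hxz.diff_dist_adj (u := t)
    rw [SimpleGraph.dist_comm (u := t) (v := z), SimpleGraph.dist_comm (u := t) (v := x)] at this
    omega
  exact (hc₁.of_adj hz' hst hlt hzs).neighborCommutator_eq_neighborCommutator h

theorem lt_three : b < 3 := by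
  by_contra! hb
  obtain ⟨t, ht⟩ := hc.exists_neighborCommutator_eq_of_three_le h hb
  have hconst : ∀ {z z'}, Γ.Adj x z → Γ.Adj x z' →
      neighborCommutator G Γ p z = neighborCommutator G Γ p z' :=
    hc.eq_of_forall_eq_smul h
      (.of_conj_smul fun g _ z => h.conj_smul_neighborCommutator g z) fun z hz hzv g hg => by
        have hgx : g • x = x := (hc.vertexModule_le_arcStab h hg).1
        rw [ht z hz hzv, ht _ (h.adj_smul_of_smul_eq hgx hz) (hc.not_le_centralizer_smul h hg hzv)]
  refine hc.neighborCommutator_left_ne_bot h (h.eq_bot_of_le_normalizer hc.adj_left.symm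
    (h.neighborCommutator_le_arcStab hc.adj_left.symm)
    (h.stabilizer_le_normalizer_neighborCommutator y) ?_)
  refine le_normalizer_iff_conj_smul_eq.2 fun g hg => ?_
  rw [h.conj_smul_neighborCommutator]
  exact hconst (h.adj_smul_of_smul_eq hg hc.adj_left) hc.adj_left

end IsCriticalPath

section DistTwo

theorem isCriticalPath_two_of_adj (hu : Γ.Adj u q) (hv : Γ.Adj v q)
    (hne : ¬ vertexModule G Γ p u ≤ centralizer (vertexModule G Γ p v)) :
    IsCriticalPath G Γ p 2 u q q v := by
  have hdist : ∀ {u v}, Γ.Adj u v → Γ.dist u v < 2 := fun huv =>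
    (SimpleGraph.dist_eq_one_iff_adj.2 huv).trans_lt one_lt_two
  refine ⟨hu, hv.symm, hdist hu, hdist hv.symm, ?_, hne⟩
  have := hv.diff_dist_adj (u := u)
  have := hdist hu
  omega

variable [Finite G] (h : IsCriticalDist G Γ n p 2)

include h

theorem IsCriticalDist.exists_isCriticalPath_smul :
    ∃ x y w z, ∃ g ∈ vertexModule G Γ p w, Γ.Adj x y ∧ Γ.Adj w y ∧
      IsCriticalPath G Γ p 2 z x x (g • z) := by
  obtain ⟨x, _, y, w, hc⟩ := h.exists_isCriticalPath
  have hxy : Γ.Adj x y := SimpleGraph.dist_eq_one_iff_adj.1 (by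
    have := hc.dist_left_eq h
    omega)
  have hc := isCriticalPath_two_of_adj hxy hc.adj_right.symm hc.not_le_centralizer
  obtain ⟨ℓ, a, a', hl, ha, rfl, hcrit⟩ := hc.exists_labelling_forall_not_le_centralizer h
  obtain ⟨d, hd⟩ := exists_fin_ne_ne (Nat.le_of_succ_le h.four_le) a a'
  obtain ⟨d', hd'⟩ := exists_fin_notMem (s := {a, a', d})
    (Finset.card_le_three.trans_lt h.four_le)
  simp only [Finset.mem_insert, Finset.mem_singleton, not_or] at hd'
  obtain ⟨hda, hda', hdd⟩ := hd'
  obtain ⟨g, hg, σ, hσ, σa, -, σd⟩ := hc.exists_mem_actsAs h hl ha rfl hd ⟨hda, hda'⟩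
  have hgd : g • ℓ a d = ℓ a d' := by rw [hσ a d hd.1.symm, σa, σd]
  refine ⟨x, ℓ a a', w, ℓ a d, g, hg, hxy, hc.adj_right.symm, isCriticalPath_two_of_adj
    (hl.adj a d hd.1.symm).symm (hgd ▸ hl.adj a d' (Ne.symm hda)).symm ?_⟩
  obtain ⟨τ, hτ⟩ := exists_perm_map_eq (l := [a, d, a']) (l' := [a, d, d'])
    (by simp [ha, hd.1.symm, hd.2]) (by simp [hd.1.symm, Ne.symm hda, Ne.symm hdd]) rfl
  simp only [List.map_cons, List.map_nil, List.cons.injEq, and_true] at hτ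
  obtain ⟨τa, τd, τa'⟩ := hτ
  obtain ⟨k, -, hk⟩ := hl.exists_actsAs τ
  have hne := (hcrit d hd).1
  rwa [← h.vertexModule_smul_le_centralizer_iff k, hk a d hd.1.symm, hk a a' ha, τa, τd, τa',
    ← hgd] at hne

namespace IsCriticalPath

variable (hc : IsCriticalPath G Γ p 2 z x x z')

include hc

theorem pArcStab_le_centralizer_neighborCommutator (huq : Γ.Adj u q) :
    pArcStab G p u q ≤ centralizer (neighborCommutator G Γ p q) := by
  have hzx : pArcStab G p z x ≤ centralizer (neighborCommutator G Γ p x) :=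
    (hc.pArcStab_le_sup h).trans (sup_le
      ((h.vertexModule_le_centralizer_self z').trans
        (centralizer_le (h.neighborCommutator_le_vertexModule hc.adj_right)))
      ((h.pKernel_le_centralizer_vertexModule z).trans
        (centralizer_le (h.neighborCommutator_le_vertexModule hc.adj_left.symm))))
  obtain ⟨g, rfl, rfl⟩ := h.exists_smul_arc_eq hc.adj_left huq
  simpa only [conj_smul_pArcStab, h.conj_smul_neighborCommutator] using
    conj_smul_le_centralizer hzx g

theorem neighborCommutator_inf_eq_bot (huq : Γ.Adj u q) :
    neighborCommutator G Γ p u ⊓ neighborCommutator G Γ p q = ⊥ := by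
  have hactive : ∀ {s X}, X ≤ neighborCommutator G Γ p s → ∀ t, Γ.Adj s t →
      ∃ B : Subgroup G, ActiveNormal Γ s t B ∧ B ≤ normalizer X := fun {s X} hX t hst =>
    ⟨_, h.activeNormal_pArcStab hst, le_normalizer_of_le_centralizer (by
      rw [pArcStab_comm]
      exact (hc.pArcStab_le_centralizer_neighborCommutator h hst.symm).trans
        (centralizer_le hX))⟩
  exact h.eq_bot_of_activeNormal h.four_le huq
    (inf_le_left.trans (h.neighborCommutator_le_arcStab huq))
    (le_normalizer_inf (inf_le_left.trans (h.stabilizer_le_normalizer_neighborCommutator u))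
      (inf_le_right.trans (h.stabilizer_le_normalizer_neighborCommutator q)))
    (hactive inf_le_left) (hactive inf_le_right)

end IsCriticalPath

/-- The commutator of `t` and `g t g⁻¹` is also the commutator of `t g t⁻¹` and `g`, as `p = 2` and
all of these elements are involutions. -/
theorem IsCriticalDist.false_of_smul (hxy : Γ.Adj x y) (hwy : Γ.Adj w y)
    (hg : g ∈ vertexModule G Γ p w) (hc : IsCriticalPath G Γ p 2 z x x (g • z)) : False := by
  have hinv : ∀ {u} {k : G}, k ∈ vertexModule G Γ p u → k⁻¹ = k := by
    intro u k hk
    have hpow := (h.vertexModule_le_omegaCenter u hk).2.2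
    rw [hc.prime_eq_two h, pow_two] at hpow
    exact inv_eq_of_mul_eq_one_right hpow
  obtain ⟨t, ht, htz⟩ := hc.symm.exists_notMem_localKernel h
  have ht' : g * t * g⁻¹ ∈ vertexModule G Γ p (g • z) :=
    h.conj_smul_vertexModule g z ▸ conj_mem_conj_smul ht
  have htz' : g * t * g⁻¹ ∉ localKernel G Γ z := by
    have hz : z = g • g • z := by rw [← inv_smul_eq_iff, hinv hg]
    rw [hz, ← h.conj_smul_localKernel, mem_conj_smul]
    simpa only [mul_assoc, inv_mul_cancel_left, inv_mul_cancel, mul_one] using htz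
  have hty : t • y = y := (mem_localKernel.1 (h.le_localKernel_of_dist_lt z x hc.dist_left_lt ht)).2
    y hxy
  have hx : t * (g * t * g⁻¹) * t⁻¹ * (g * t * g⁻¹)⁻¹ ∈ neighborCommutator G Γ p x :=
    h.commutator_vertexModule_le_neighborCommutator hc.adj_left.symm hc.adj_right
      (commutator_mem_commutator ht ht')
  have hy : t * (g * t * g⁻¹) * t⁻¹ * (g * t * g⁻¹)⁻¹ ∈ neighborCommutator G Γ p y := by
    have hcomm : t * (g * t * g⁻¹) * t⁻¹ * (g * t * g⁻¹)⁻¹ =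
        (t * g * t⁻¹) * g * (t * g * t⁻¹)⁻¹ * g⁻¹ := by
      simp only [mul_inv_rev, hinv ht, hinv hg, mul_assoc]
    rw [hcomm]
    exact h.commutator_vertexModule_le_neighborCommutator
      (h.adj_smul_of_smul_eq hty hwy.symm) hwy.symm (commutator_mem_commutator
        (h.conj_smul_vertexModule t w ▸ conj_mem_conj_smul hg) hg)
  have hone := (hc.neighborCommutator_inf_eq_bot h hxy).le (mem_inf.2 ⟨hx, hy⟩)
  refine hc.not_commute h ht' htz' ht htz ?_
  rwa [mem_bot, mul_inv_eq_one, mul_inv_eq_iff_eq_mul] at hone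

end DistTwo

theorem IsCriticalDist.false [Finite G] (h : IsCriticalDist G Γ n p b) : False := by
  obtain ⟨x, y, v, w, hc⟩ := h.exists_isCriticalPath
  have hb₂ := h.two_le
  have hb₃ := hc.lt_three h
  obtain rfl : b = 2 := by omega
  obtain ⟨x, y, w, z, g, hg, hxy, hwy, hc⟩ := h.exists_isCriticalPath_smul
  exact h.false_of_smul hxy hwy hg hc

theorem PLocPair.false [Finite G] (h : PLocPair G Γ n p) : False :=
  let ⟨_, hb⟩ := h.exists_isCriticalDist
  hb.false

end NeighborCommutator

section EdgeKernel

open Subgroup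

variable {G V : Type*} [Group G] [MulAction G V] {Γ : SimpleGraph V} {n p : ℕ} {x y : V}

theorem LocPair.pLocPair (hL : LocPair G Γ n) (hn : 4 ≤ n) (hp : p.Prime) (hxy : Γ.Adj x y)
    (hne : pCore p (edgeKernel G Γ x y) ≠ ⊥) : PLocPair G Γ n p where
  __ := hL
  four_le := hn
  prime := hp
  pCore_edgeKernel_ne_bot u v huv := by
    obtain ⟨g, rfl, rfl⟩ := hL.exists_smul_arc_eq hxy huv
    rwa [← hL.conj_smul_edgeKernel, ← conj_smul_pCore, Ne, smul_eq_iff_eq_inv_smul, smul_bot]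

theorem LocPair.edgeKernel_eq_bot [Finite G] (hL : LocPair G Γ n) (hn : 4 ≤ n)
    (hxy : Γ.Adj x y) : edgeKernel G Γ x y = ⊥ := by
  by_contra hne
  obtain ⟨M, hM, hsimple⟩ := exists_isSimpleGroup_relSubnormal hne
  obtain hperf | ⟨p, hp, hMp⟩ := commutator_eq_self_or_isPGroup M
  · have hx : RelSubnormal (edgeKernel G Γ x y) (localKernel G Γ x) := by
      rw [edgeKernel_comm]
      exact hL.relSubnormal_edgeKernel hxy.symm hxy.symm
    exact hL.not_relSubnormal_of_adj hperf hn hxy (hM.trans hx)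
      (hM.trans (hL.relSubnormal_edgeKernel hxy hxy))
  · refine (hL.pLocPair hn hp hxy fun hbot => ?_).false
    exact (Subgroup.isSimpleGroup_iff.1 hsimple).1 (eq_bot_mono (hM.le_pCore hMp) hbot)

end EdgeKernel

section BallStab

variable {V : Type*} {Γ : SimpleGraph V} {n : ℕ} {x y : V}

theorem exists_isPairLabelling_of_equiv {G : Type*} [Group G] [MulAction G V]
    (e : Γ.neighborSet x ≃ OPairs n) (φ : stabilizer G x →* Equiv.Perm (Fin n))
    (hφ : Function.Surjective φ)
    (he : ∀ (g : stabilizer G x) (v : Γ.neighborSet x),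
      ((e.symm (φ g • e v) : Γ.neighborSet x) : V) = g • (v : V)) :
    ∃ ℓ : Fin n → Fin n → V, IsPairLabelling G Γ x ℓ := by
  let ℓ : Fin n → Fin n → V := fun a b => if hab : a ≠ b then e.symm ⟨(a, b), hab⟩ else x
  have hℓ : ∀ a b (hab : a ≠ b), ℓ a b = e.symm ⟨(a, b), hab⟩ := fun a b hab => dif_pos hab
  have hact : ∀ g : stabilizer G x, ActsAs ℓ (g : G) (φ g) := by
    intro g a b hab
    have hg := he g (e.symm ⟨(a, b), hab⟩)
    rw [Equiv.apply_symm_apply] at hg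
    rw [hℓ a b hab, hℓ _ _ ((φ g).injective.ne hab)]
    exact hg.symm
  refine ⟨ℓ, fun a b hab => ?_, fun a b c d hab hcd heq => ?_, fun y hy => ?_,
    fun g hg => ⟨φ ⟨g, hg⟩, hact ⟨g, hg⟩⟩, fun σ => ?_⟩
  · rw [hℓ a b hab]
    exact (e.symm ⟨(a, b), hab⟩).2
  · rw [hℓ a b hab, hℓ c d hcd] at heq
    exact Prod.ext_iff.1 (Subtype.ext_iff.1 (e.symm.injective (Subtype.ext heq)))
  · refine ⟨_, _, (e ⟨y, hy⟩).2, ?_⟩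
    rw [hℓ _ _ (e ⟨y, hy⟩).2]
    exact congrArg Subtype.val (e.symm_apply_apply ⟨y, hy⟩)
  · obtain ⟨g, rfl⟩ := hφ σ
    exact ⟨g, g.2, hact g⟩

variable {G : Subgroup (Equiv.Perm V)}

theorem IsLocallyOPairs.locPair (hloc : IsLocallyOPairs n Γ G) (hconn : Γ.Connected) :
    LocPair G Γ n where
  connected := hconn
  faithful _ hg := Subtype.ext (Equiv.ext hg)
  adj g u v := (hloc.1 g.1 g.2 u v).1
  exists_smul_eq := hloc.2.1.exists_smul_eq
  exists_labelling x :=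
    let ⟨e, φ, hφ, he⟩ := hloc.2.2 x
    exists_isPairLabelling_of_equiv e φ hφ he

theorem mem_ballStab {i : ℕ} {g : G} :
    g ∈ ballStab Γ G x i ↔ ∀ v, Γ.dist x v ≤ i → g • v = v := by
  simp only [ballStab, Subgroup.mem_iInf, mem_stabilizer_iff]

theorem ballStab_two_le_localKernel (hxy : Γ.Adj x y) :
    ballStab Γ G x 2 ≤ localKernel G Γ y := by
  intro g hg
  rw [mem_ballStab] at hg
  have hdist := SimpleGraph.dist_eq_one_iff_adj.2 hxy
  refine mem_localKernel.2 ⟨hg y (by omega), fun z hyz => hg z ?_⟩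
  have := hyz.diff_dist_adj (u := x)
  omega

theorem ballStab_two_inf_le_edgeKernel (x y : V) :
    ballStab Γ G x 2 ⊓ ballStab Γ G y 2 ≤ edgeKernel G Γ x y :=
  le_iInf₂ fun _ hz => hz.elim
    (fun hxz => inf_le_left.trans (ballStab_two_le_localKernel hxz))
    (fun hyz => inf_le_right.trans (ballStab_two_le_localKernel hyz))

theorem ballStab_inf_le_arcStab (x y : V) (i : ℕ) :
    ballStab Γ G x i ⊓ ballStab Γ G y i ≤ arcStab G x y :=
  inf_le_inf (fun _ hg => mem_ballStab.1 hg x (by simp)) fun _ hg => mem_ballStab.1 hg y (by simp)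

end BallStab

/-- for `n ≥ 3` and `(Γ,G)` a locally `L` pair, where `L` is the group
induced by `Sym(n)` on ordered pairs of distinct elements of `{1,…,n}`, the group
`G_{xy}^{[2]} = G_x^{[2]} ∩ G_y^{[2]}` is trivial for every edge `{x,y}`. -/
theorem stmt_11 {V : Type*} [Fintype V] (n : ℕ) (hn : 3 ≤ n)
    (Γ : SimpleGraph V) (hconn : Γ.Connected)
    (G : Subgroup (Equiv.Perm V)) (hloc : IsLocallyOPairs n Γ G)
    (x y : V) (hxy : Γ.Adj x y) :
    ballStab Γ G x 2 ⊓ ballStab Γ G y 2 = ⊥ := by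
  have hL := hloc.locPair hconn
  obtain rfl | hn := hn.eq_or_lt
  · exact eq_bot_mono (ballStab_inf_le_arcStab x y 2) (hL.arcStab_eq_bot hxy)
  · exact eq_bot_mono (ballStab_two_inf_le_edgeKernel x y) (hL.edgeKernel_eq_bot hn hxy)
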